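/- arXiv:1701.06377 — 12 statements merged into one kernel-verified Lean document; each statement's English description precedes it below -/
import Mathlib

section
/- For every integer n ≥ 2, the number of arithmetical structures on the path P_n equals the Catalan number C_{n−1} = (1/n)·binomial(2n−2, n−1). -/
/-!
Pad the vector `r` of an arithmetical structure by `0` on the left. Since `r_n` divides every `r_i`
and the `r_i` have gcd `1`, the padded sequence is `0, w_1, …, w_{n-1}, 1`, where each `w_i` is
positive and divides the sum of its two neighbours; conversely any such sequence comes from exactly
one structure, `d` being the vector of quotients.

These sequences are the ones obtained from `0, 1` by repeatedly inserting the sum `x + y` between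
two adjacent entries `x, y`. Insertion and its inverse preserve the divisibility condition
(`divMid_insert`). Conversely, if `w` is nonempty, let `m` be its leftmost maximum, with neighbours
`x < m` and `0 < y ≤ m`; then `m ∣ x + y < 2m` forces `m = x + y`, so `m` can be deleted
(`exists_fill_eq`).

A history of insertions, up to reordering independent ones, is a binary tree: the root is the
first entry `a + b` inserted between the ends `a, b`, and the subtrees describe what is inserted on
either side of it (`fill`). The tree can be recovered from the sequence because, for `b > 0`, the
root is the last occurrence of `a + b` (`fill_injective`). So structures on `P_n` correspond to
binary trees with `n - 1` nodes, which are counted by `catalan (n - 1)`.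
-/

/-- An arithmetical structure on the path `P_n` (vertices indexed `0, …, n-1`):
a pair `(d, r)` of positive integer vectors with `gcd(r) = 1` satisfying
`d_0 r_0 = r_1`, `d_i r_i = r_{i-1} + r_{i+1}` for `0 < i < n-1`, and
`d_{n-1} r_{n-1} = r_{n-2}`. -/
def IsArithPath (n : ℕ) (d r : Fin n → ℕ) : Prop :=
  (∀ i, 0 < d i) ∧ (∀ i, 0 < r i) ∧ Finset.univ.gcd r = 1 ∧
  ∀ i : Fin n, d i * r i =
    (if 0 < i.val then r ⟨i.val - 1, Nat.lt_of_le_of_lt (Nat.sub_le _ _) i.isLt⟩ else 0) +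
    (if h : i.val + 1 < n then r ⟨i.val + 1, h⟩ else 0)

/-! ### Sequences built by inserting sums -/

/-- The list of entries strictly between the ends `a` and `b` after the insertions recorded by a
tree: the root inserts `a + b`, the left subtree acts between `a` and `a + b`, and the right
subtree between `a + b` and `b`. -/
def fill : BinaryTree Unit → ℕ → ℕ → List ℕ
  | .nil, _, _ => []
  | .node _ l r, a, b => fill l a (a + b) ++ (a + b) :: fill r (a + b) b

/-- Every entry of the list other than the first and the last divides the sum of its two
neighbours. -/
def DivMid : List ℕ → Prop
  | x :: y :: z :: l => y ∣ x + z ∧ DivMid (y :: z :: l)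
  | _ => True

theorem length_fill (T : BinaryTree Unit) (a b : ℕ) : (fill T a b).length = T.numNodes := by
  induction T generalizing a b with
  | nil => simp [fill, BinaryTree.numNodes]
  | node _ l r ihl ihr => simp [fill, BinaryTree.numNodes, ihl, ihr]; omega

theorem le_of_mem_fill (T : BinaryTree Unit) (a b : ℕ) : ∀ x ∈ fill T a b, a + b ≤ x := by
  induction T generalizing a b with
  | nil => simp [fill]
  | node _ l r ihl ihr =>
    intro x hx
    simp only [fill, List.mem_append, List.mem_cons] at hx
    rcases hx with h | h | h
    · have := ihl _ _ x h; omega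
    · omega
    · have := ihr _ _ x h; omega

/-- The root entry `a + b` is the last occurrence of `a + b`: everything to its right is at least
`a + 2 * b`. For `a = 0` it may also occur on the left, so its first occurrence would not do. -/
theorem fill_injective (T T' : BinaryTree Unit) (a b : ℕ) (hb : 0 < b)
    (h : fill T a b = fill T' a b) : T = T' := by
  induction T generalizing a b T' with
  | nil => cases T' <;> simp_all [fill]
  | node _ l r ihl ihr =>
    cases T' with
    | nil => simp [fill] at h
    | node _ l' r' =>
      have key : ∀ t : BinaryTree Unit, a + b ∉ fill t (a + b) b := fun t ht => by
        have := le_of_mem_fill t _ _ _ ht; omega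
      simp only [fill] at h
      obtain ⟨h1, h2⟩ : fill l a (a + b) = fill l' a (a + b) ∧
          fill r (a + b) b = fill r' (a + b) b := by
        -- Reversal turns the last occurrence of `a + b` into the first.
        have hr := congrArg List.reverse h
        simp only [List.reverse_append, List.reverse_cons, List.append_assoc,
          List.singleton_append] at hr
        have h3 : ∀ x₁ x₂ z₁ z₂ : List ℕ, a + b ∉ x₁ → a + b ∉ x₂ →
            x₁ ++ (a + b) :: z₁ = x₂ ++ (a + b) :: z₂ → x₁ = x₂ ∧ z₁ = z₂ := by
          intro x₁
          induction x₁ with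
          | nil => rintro (_ | ⟨c, x₂⟩) <;> simp +contextual
          | cons e x₁ ih => rintro (_ | ⟨c, x₂⟩) <;> simp <;> grind
        have := h3 _ _ _ _ (by simpa using key r) (by simpa using key r') hr
        simpa [and_comm] using this
      rw [ihl _ _ _ (by omega) h1, ihr _ _ _ hb h2]

theorem divMid_insert (p q : List ℕ) (a b : ℕ) :
    DivMid (p ++ a :: (a + b) :: b :: q) ↔ DivMid (p ++ a :: b :: q) := by
  have hq : DivMid ((a + b) :: b :: q) ↔ DivMid (a :: b :: q) := by
    cases q with
    | nil => simp [DivMid]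
    | cons z q =>
      have : a + b + z = b + (a + z) := by ring
      simp [DivMid, this]
  induction p with
  | nil => simp [DivMid] at hq ⊢; exact hq
  | cons x p ih =>
    match p, ih with
    | [], ih =>
      have : x + (a + b) = a + (x + b) := by ring
      simp [DivMid, this] at hq ⊢; tauto
    | [y], ih => simp [DivMid] at ih ⊢; tauto
    | y :: z :: p, ih => simp [DivMid] at ih ⊢; tauto

theorem divMid_fill (T : BinaryTree Unit) (p q : List ℕ) (a b : ℕ)
    (h : DivMid (p ++ a :: b :: q)) : DivMid (p ++ a :: (fill T a b ++ b :: q)) := by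
  induction T generalizing p q a b with
  | nil => simpa [fill] using h
  | node _ l r ihl ihr =>
    have h1 := ihl _ _ _ _ ((divMid_insert _ _ _ _).2 h)
    have h2 := ihr (p ++ a :: fill l a (a + b)) q (a + b) b (by simpa using h1)
    simpa [fill] using h2

/-- Sequences of the form `a, fill T a b, b` are closed under inserting the sum of two adjacent
entries: the insertion hangs a new node on the leaf of `T` between these entries. -/
theorem exists_fill_insert (T : BinaryTree Unit) (a b : ℕ) (p q : List ℕ) (x y : ℕ)
    (h : a :: (fill T a b ++ [b]) = p ++ x :: y :: q) :
    ∃ T' : BinaryTree Unit, a :: (fill T' a b ++ [b]) = p ++ x :: (x + y) :: y :: q := by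
  induction T generalizing p q a b with
  | nil =>
    refine ⟨.node () .nil .nil, ?_⟩
    match p with
    | [] => simp [fill] at h ⊢; grind
    | [_] => simp [fill] at h
    | _ :: _ :: _ => simp [fill] at h
  | node _ l r ihl ihr =>
    have h' : (a :: fill l a (a + b)) ++ (a + b) :: (fill r (a + b) b ++ [b]) =
        (p ++ [x]) ++ y :: q := by simpa [fill] using h
    -- Both `x` and `y` lie in the part up to and including the root entry `a + b`.
    have hl : ∀ c, a :: fill l a (a + b) = p ++ [x] ++ c →
        y :: q = c ++ (a + b) :: (fill r (a + b) b ++ [b]) →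
        ∃ T' : BinaryTree Unit, a :: (fill T' a b ++ [b]) = p ++ x :: (x + y) :: y :: q := by
      intro c h1 h2
      obtain ⟨q', hc, rfl⟩ : ∃ q', c ++ [a + b] = y :: q' ∧ q = q' ++ (fill r (a + b) b ++ [b]) := by
        cases c <;> simp_all
      obtain ⟨l', hl'⟩ := ihl a (a + b) p q' (by
        rw [← List.cons_append, h1, List.append_assoc, hc]; simp)
      refine ⟨.node () l' r, ?_⟩
      have := congrArg (· ++ (fill r (a + b) b ++ [b])) hl'
      simpa [fill] using this
    rcases List.append_eq_append_iff.1 h' with ⟨c, h1, h2⟩ | ⟨c, h1, h2⟩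
    · rcases List.eq_nil_or_concat c with rfl | ⟨c, z, rfl⟩
      · exact hl [] (by rw [h1]; simp) h2.symm
      · rw [List.concat_eq_append] at h1 h2
        obtain ⟨rfl, h4⟩ := List.append_inj' (h1.trans (List.append_assoc _ c [z]).symm) rfl
        obtain rfl : x = z := by simpa using h4
        obtain ⟨r', hr'⟩ := ihr (a + b) b c q (by simpa using h2)
        exact ⟨.node () l r', by simp [fill, hr']⟩
    · exact hl c h1 h2

theorem exists_leftmost_max (w : List ℕ) (hw : w ≠ []) :
    ∃ u m v, w = u ++ m :: v ∧ (∀ e ∈ u, e < m) ∧ ∀ e ∈ v, e ≤ m := by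
  induction w with
  | nil => exact absurd rfl hw
  | cons a w ih =>
    by_cases h : w = []
    · exact ⟨[], a, [], by simp [h]⟩
    · obtain ⟨u, m, v, rfl, hu, hv⟩ := ih h
      by_cases ham : a < m
      · exact ⟨a :: u, m, v, by simp, by simpa using ⟨ham, hu⟩, hv⟩
      · refine ⟨[], a, u ++ m :: v, by simp, by simp, ?_⟩
        intro e he
        simp at he
        rcases he with he | rfl | he
        · have := hu e he; omega
        · omega
        · have := hv e he; omega

theorem DivMid.mid {p q : List ℕ} {x y z : ℕ} (h : DivMid (p ++ x :: y :: z :: q)) :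
    y ∣ x + z := by
  induction p with
  | nil => exact h.1
  | cons s p ih =>
    apply ih
    match p, h with
    | [], h => exact h.2
    | [_], h => exact h.2
    | _ :: _ :: _, h => exact h.2

/-- The leftmost maximum of `w` is the sum of its neighbours in `0, w, 1`; deleting it preserves
the divisibility condition, and reinserting it extends the tree. -/
theorem exists_fill_eq (w : List ℕ) (hpos : ∀ e ∈ w, 0 < e) (h : DivMid (0 :: (w ++ [1]))) :
    ∃ T : BinaryTree Unit, fill T 0 1 = w := by
  induction hn : w.length generalizing w with
  | zero => exact ⟨.nil, by simp_all [fill]⟩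
  | succ n ih =>
    obtain ⟨u, m, v, rfl, hu, hv⟩ := exists_leftmost_max w (by rintro rfl; simp at hn)
    have hm : 0 < m := hpos m (by simp)
    obtain ⟨p, x, hpx⟩ : ∃ p x, 0 :: u = p ++ [x] := by
      rcases List.eq_nil_or_concat (0 :: u) with h | ⟨p, x, h⟩
      · simp at h
      · exact ⟨p, x, by simpa using h⟩
    obtain ⟨y, q, hyq⟩ : ∃ y q, v ++ [1] = y :: q := by cases v <;> simp
    have hx : x < m := by
      have : x ∈ 0 :: u := by simp [hpx]
      rcases List.mem_cons.1 this with rfl | h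
      · exact hm
      · exact hu x h
    have hy : 0 < y ∧ y ≤ m := by
      have : y ∈ v ++ [1] := by simp [hyq]
      rcases List.mem_append.1 this with h | h
      · exact ⟨hpos y (by simp [h]), hv y h⟩
      · simp at h; omega
    have hL : 0 :: (u ++ m :: v ++ [1]) = p ++ x :: m :: y :: q := by
      calc _ = (0 :: u) ++ m :: (v ++ [1]) := by simp
        _ = _ := by rw [hpx, hyq]; simp
    have hL' : 0 :: (u ++ v ++ [1]) = p ++ x :: y :: q := by
      calc _ = (0 :: u) ++ (v ++ [1]) := by simp
        _ = _ := by rw [hpx, hyq]; simp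
    rw [hL] at h
    obtain rfl : m = x + y := by
      obtain ⟨c, hc⟩ := h.mid
      have : c < 2 := by by_contra! hc2; nlinarith
      interval_cases c <;> omega
    obtain ⟨T, hT⟩ := ih (u ++ v) (by intro e he; apply hpos; simp at he ⊢; tauto)
      (by rw [hL']; exact (divMid_insert _ _ _ _).1 h) (by simp at hn ⊢; omega)
    obtain ⟨T', hT'⟩ := exists_fill_insert T 0 1 p q x y (by rw [hT, hL'])
    refine ⟨T', ?_⟩
    rw [← hL] at hT'
    simpa [← List.append_assoc] using hT'

theorem divMid_iff (L : List ℕ) : DivMid L ↔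
    ∀ i, i + 2 < L.length → L.getD (i + 1) 0 ∣ L.getD i 0 + L.getD (i + 2) 0 := by
  induction L with
  | nil => simp [DivMid]
  | cons x L ih =>
    match L, ih with
    | [], _ => simp [DivMid]
    | [y], _ => simp [DivMid]
    | y :: z :: l, ih =>
      rw [DivMid, ih]
      constructor
      · rintro ⟨h0, h⟩ (_ | i) hi
        · simpa using h0
        · simpa using h i (by simpa using hi)
      · intro h
        refine ⟨by simpa using h 0 (by simp), fun i hi => ?_⟩
        simpa using h (i + 1) (by simpa using hi)

/-! ### Arithmetical structures as padded lists -/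

/-- The vector `r` shifted to indices `1, …, n` and extended by `0`. The value at `0` is stored in
the list, the values beyond `n` are the default of `getD`. -/
def padded {n : ℕ} (r : Fin n → ℕ) (i : ℕ) : ℕ := (0 :: List.ofFn r).getD i 0

theorem padded_succ {n : ℕ} (r : Fin n → ℕ) (i : Fin n) : padded r (i + 1) = r i := by
  simp [padded]

theorem padded_eq_zero {n : ℕ} (r : Fin n → ℕ) (i : ℕ) (h : n < i) : padded r i = 0 := by
  obtain ⟨i, rfl⟩ : ∃ j, i = j + 1 := ⟨i - 1, by omega⟩
  exact List.getD_eq_default _ _ (by simp; omega)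

theorem nbr_sum_eq {n : ℕ} (r : Fin n → ℕ) (i : Fin n) :
    (if 0 < i.val then r ⟨i.val - 1, Nat.lt_of_le_of_lt (Nat.sub_le _ _) i.isLt⟩ else 0) +
    (if h : i.val + 1 < n then r ⟨i.val + 1, h⟩ else 0) = padded r i + padded r (i + 2) := by
  congr 1
  · rcases i with ⟨_ | i, hi⟩
    · simp [padded]
    · simpa using (padded_succ r ⟨i, by omega⟩).symm
  · split_ifs with h
    · exact (padded_succ r ⟨i + 1, h⟩).symm
    · exact (padded_eq_zero r _ (by omega)).symm

/-- The last entry divides all entries, by descending along the recurrence, hence it divides their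
gcd. -/
theorem last_eq_one {m : ℕ} {d r : Fin (m + 1) → ℕ} (h : IsArithPath (m + 1) d r) :
    r (Fin.last m) = 1 := by
  obtain ⟨_, _, hg, he⟩ := h
  have key : ∀ k ≤ m, padded r (m + 1) ∣ padded r (m + 1 - k) ∧
      padded r (m + 1) ∣ padded r (m + 2 - k) := by
    intro k
    induction k with
    | zero => intro _; exact ⟨dvd_rfl, (dvd_zero _).trans (padded_eq_zero r (m + 2) (by omega)).symm.dvd⟩
    | succ k ih =>
      intro hk
      obtain ⟨h1, h2⟩ := ih (by omega)
      have h3 := he ⟨m - k, by omega⟩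
      rw [nbr_sum_eq, ← padded_succ r] at h3
      have e1 : m + 1 - k = m - k + 1 := by omega
      have e2 : m + 2 - k = m - k + 2 := by omega
      have e3 : m + 1 - (k + 1) = m - k := by omega
      have e4 : m + 2 - (k + 1) = m - k + 1 := by omega
      rw [e1] at h1
      rw [e2] at h2
      rw [e3, e4]
      refine ⟨(Nat.dvd_add_iff_left h2).2 ?_, h1⟩
      rw [← h3]
      exact h1.mul_left _
  have : padded r (m + 1) ∣ 1 := by
    refine (Finset.dvd_gcd fun i _ => ?_).trans hg.dvd
    rw [← padded_succ r i]
    have := (key (m - i) (by omega)).1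
    rwa [show m + 1 - (m - i) = i + 1 by omega] at this
  exact (padded_succ r (Fin.last m)).symm.trans (Nat.dvd_one.1 this)

/-- The `r`-vectors of arithmetical structures on `P_{m+1}`, written as lists, are the lists
`fill T 0 1 ++ [1]` for trees `T` with `m` nodes. For `m = 0` this fails, since `d_1 r_1 = 0` is
impossible for positive `d_1, r_1`. -/
theorem image_ofFn_eq (m : ℕ) (hm : 1 ≤ m) :
    (fun p : (Fin (m + 1) → ℕ) × (Fin (m + 1) → ℕ) => List.ofFn p.2) ''
        {p | IsArithPath (m + 1) p.1 p.2} =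
      (fun T => fill T 0 1 ++ [1]) '' (BinaryTree.treesOfNumNodesEq m : Set (BinaryTree Unit)) := by
  ext L
  simp only [Set.mem_image, Set.mem_ofPred_eq, Finset.mem_coe, BinaryTree.mem_treesOfNumNodesEq]
  constructor
  · rintro ⟨⟨d, r⟩, h, rfl⟩
    have hlast := last_eq_one h
    obtain ⟨-, hr, -, he⟩ := h
    simp only at *
    have hL : List.ofFn r = List.ofFn (fun i : Fin m => r i.castSucc) ++ [1] := by
      rw [List.ofFn_succ_last, hlast]
    obtain ⟨T, hT⟩ := exists_fill_eq (List.ofFn (fun i : Fin m => r i.castSucc))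
      (by simp only [List.mem_ofFn]; rintro _ ⟨i, rfl⟩; exact hr _) (by
        rw [← hL, divMid_iff]
        intro i hi
        have hi' : i < m := by simp at hi; omega
        have h3 := he ⟨i, by omega⟩
        rw [nbr_sum_eq, ← padded_succ r] at h3
        exact Dvd.intro_left _ h3)
    refine ⟨T, ?_, by rw [hT, hL]⟩
    rw [← length_fill T 0 1, hT, List.length_ofFn]
  · rintro ⟨T, hT, rfl⟩
    obtain ⟨r, hr⟩ : ∃ r : Fin (m + 1) → ℕ, List.ofFn r = fill T 0 1 ++ [1] := by
      have hlen : (fill T 0 1 ++ [1]).length = m + 1 := by simp [length_fill, hT]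
      exact ⟨fun i => (fill T 0 1 ++ [1])[i], by
        apply List.ext_getElem <;> simp [hlen, -List.length_append, -List.ofFn_succ]⟩
    have hpos : ∀ i, 0 < r i := by
      intro i
      have : r i ∈ fill T 0 1 ++ [1] := by rw [← hr]; exact List.mem_ofFn.2 ⟨i, rfl⟩
      rcases List.mem_append.1 this with h | h
      · exact le_of_mem_fill T 0 1 _ h
      · simp at h; omega
    have hlast : r (Fin.last m) = 1 := by
      rw [List.ofFn_succ_last] at hr
      simpa using (List.append_inj' hr rfl).2
    have hdvd : ∀ i : Fin (m + 1), r i ∣ padded r i + padded r (i + 2) := by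
      intro i
      rcases eq_or_ne i (Fin.last m) with rfl | hi
      · simp [hlast]
      · have hi' : i.val < m := Fin.val_lt_last hi
        have := divMid_fill T [] [] 0 1 (by simp [DivMid])
        rw [List.nil_append, ← hr, divMid_iff] at this
        rw [← padded_succ r i]
        exact this i (by simp; omega)
    have hsum : ∀ i : Fin (m + 1), 0 < padded r i + padded r (i + 2) := by
      rintro ⟨_ | i, hi⟩
      · have := padded_succ r ⟨1, by omega⟩
        have := hpos ⟨1, by omega⟩
        simp_all
      · have := padded_succ r ⟨i, by omega⟩
        have := hpos ⟨i, by omega⟩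
        simp_all
    refine ⟨(fun i => (padded r i + padded r (i + 2)) / r i, r), ⟨?_, hpos, ?_, ?_⟩, hr⟩
    · exact fun i => Nat.div_pos (Nat.le_of_dvd (hsum i) (hdvd i)) (hpos i)
    · exact Nat.dvd_one.1 ((Finset.gcd_dvd (Finset.mem_univ (Fin.last m))).trans hlast.dvd)
    · intro i
      rw [nbr_sum_eq]
      exact Nat.div_mul_cancel (hdvd i)

/-- For every `n ≥ 2`, the number of arithmetical structures on the path `P_n`
equals the Catalan number `C_{n-1}`. -/
theorem arith_path_count (n : ℕ) (hn : 2 ≤ n) :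
    Nat.card {p : (Fin n → ℕ) × (Fin n → ℕ) // IsArithPath n p.1 p.2} = catalan (n - 1) := by
  obtain ⟨m, rfl⟩ : ∃ m, n = m + 1 := ⟨n - 1, by omega⟩
  have hinj : Set.InjOn (fun p : (Fin (m + 1) → ℕ) × (Fin (m + 1) → ℕ) => List.ofFn p.2)
      {p | IsArithPath (m + 1) p.1 p.2} := by
    rintro ⟨d, r⟩ ⟨-, hr, -, h⟩ ⟨d', r'⟩ ⟨-, -, -, h'⟩ heq
    obtain rfl : r = r' := List.ofFn_injective heq
    have : d = d' := funext fun i =>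
      Nat.eq_of_mul_eq_mul_right (hr i) ((h i).trans (h' i).symm)
    rw [this]
  have hinj' : Function.Injective (fun T => fill T 0 1 ++ [1]) := fun T T' h =>
    fill_injective T T' 0 1 one_pos (List.append_cancel_right h)
  change Set.ncard {p : (Fin (m + 1) → ℕ) × (Fin (m + 1) → ℕ) | IsArithPath (m + 1) p.1 p.2} = _
  rw [← hinj.ncard_image, image_ofFn_eq m (by omega),
    Set.ncard_image_of_injective _ hinj', Set.ncard_coe_finset,
    BinaryTree.treesOfNumNodesEq_card_eq_catalan, Nat.add_sub_cancel]
end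

section
/- Let n ≥ 2 and 1 ≤ k ≤ n. The number of arithmetical structures (d, r) on the path P_n with r(1) = k equals the ballot number B(n−2, n−k) = ((k−1)/(n−1))·binomial(2n−2−k, n−2). -/
/-- The ballot number `B(k, ℓ) = ((k - ℓ + 1)/(k + 1)) · C(k + ℓ, k)`
(which is `0` when `ℓ > k`, in particular when `ℓ = k + 1`). -/
def ballot (k l : ℕ) : ℕ := (k + 1 - l) * (k + l).choose k / (k + 1)

namespace ArithPath

open BinaryTree

/-! ### Sequences with the divisibility property -/

/-- Every entry of the list that has two neighbours divides their sum. -/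
def DivSeq : List ℕ → Prop
  | u :: x :: v :: Q => x ∣ u + v ∧ DivSeq (x :: v :: Q)
  | _ => True

lemma divSeq_iff_getD : ∀ L : List ℕ, DivSeq L ↔
    ∀ i, i + 2 < L.length → L.getD (i + 1) 0 ∣ L.getD i 0 + L.getD (i + 2) 0
  | [] => by simp [DivSeq]
  | [_] => by simp [DivSeq]
  | [_, _] => by simp [DivSeq]
  | u :: x :: v :: Q => by
    rw [DivSeq, divSeq_iff_getD (x :: v :: Q)]
    constructor
    · rintro ⟨h0, h⟩ (_ | i) hi
      · simpa using h0
      · simpa using h i (by simpa using hi)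
    · intro h
      refine ⟨by simpa using h 0 (by simp), fun i hi => ?_⟩
      simpa using h (i + 1) (by simpa using hi)

/-- Inserting the sum of two adjacent entries between them neither creates nor destroys the
divisibility property: it changes the neighbour sum at `u` by `u` and that at `v` by `v`. -/
lemma divSeq_insert : ∀ (P : List ℕ) (u v : ℕ) (Q : List ℕ),
    DivSeq (P ++ u :: (u + v) :: v :: Q) ↔ DivSeq (P ++ u :: v :: Q)
  | [], u, v, [] => by simp [DivSeq]
  | [], u, v, w :: Q => by
    have : u + v + w = v + (u + w) := by ring
    simp [DivSeq, this]
  | [p], u, v, Q => by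
    have h := divSeq_insert [] u v Q
    have : p + (u + v) = u + (p + v) := by ring
    simp only [List.nil_append] at h
    simp only [List.cons_append, List.nil_append]
    rw [DivSeq, h, DivSeq, this, Nat.dvd_add_right (dvd_refl u)]
  | [p, q], u, v, Q => by
    have h := divSeq_insert [q] u v Q
    simp only [List.cons_append, List.nil_append] at h ⊢
    exact and_congr_right fun _ => h
  | p :: q :: s :: P, u, v, Q => by
    have h := divSeq_insert (q :: s :: P) u v Q
    simp only [List.cons_append] at h ⊢
    exact and_congr_right fun _ => h

lemma DivSeq.of_append : ∀ {P L : List ℕ}, DivSeq (P ++ L) → DivSeq L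
  | [], _, h => h
  | [p], [], _ => by simp [DivSeq]
  | [p], [x], _ => by simp [DivSeq]
  | [p], _ :: _ :: _, h => h.2
  | [p, q], [], _ => by simp [DivSeq]
  | [p, q], x :: L, h => DivSeq.of_append (P := [q]) h.2
  | p :: q :: s :: P, L, h => DivSeq.of_append (P := q :: s :: P) h.2

/-! ### The sequence of a binary tree -/

/-- The in-order labelling of a binary tree standing in the gap between `a` and `b`: the root
gets the label `a + b`, its left subtree stands in the gap `(a, a + b)` and its right subtree in
the gap `(a + b, b)`. -/
def seq : BinaryTree Unit → ℕ → ℕ → List ℕ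
  | nil, _, _ => []
  | node _ l r, a, b => seq l a (a + b) ++ (a + b) :: seq r (a + b) b

/-- The number of nodes on the path that starts at the root and keeps going right. -/
def spine : BinaryTree Unit → ℕ
  | nil => 0
  | node _ _ r => spine r + 1

lemma length_seq (t : BinaryTree Unit) (a b : ℕ) : (seq t a b).length = t.numNodes := by
  induction t generalizing a b with
  | nil => simp [seq]
  | node _ l r hl hr => simp [seq, hl, hr, numNodes]; ring

lemma le_of_mem_seq (t : BinaryTree Unit) (a b : ℕ) : ∀ x ∈ seq t a b, a + b ≤ x := by
  induction t generalizing a b with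
  | nil => simp [seq]
  | node _ l r hl hr =>
    intro x hx
    simp only [seq, List.mem_append, List.mem_cons] at hx
    rcases hx with h | h | h
    · have := hl _ _ _ h; omega
    · omega
    · have := hr _ _ _ h; omega

/-- A tree is recovered from its sequence because the label `a + b` of the root is smaller than
everything to its left. -/
lemma seq_injective (t : BinaryTree Unit) : ∀ (t' : BinaryTree Unit) (a b : ℕ), 0 < a →
    seq t a b = seq t' a b → t = t' := by
  induction t with
  | nil =>
    intro t' a b _ h
    cases t' with
    | nil => rfl
    | node => simp [seq] at h
  | node _ l r hl hr =>
    intro t' a b ha h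
    cases t' with
    | nil => simp [seq] at h
    | node _ l' r' =>
      have key : ∀ s : BinaryTree Unit, a + b ∉ seq s a (a + b) := fun s hs => by
        have := le_of_mem_seq _ _ _ _ hs; omega
      simp only [seq] at h
      have hsub : seq l a (a + b) = seq l' a (a + b) ∧ seq r (a + b) b = seq r' (a + b) b := by
        rcases List.append_eq_append_iff.1 h with ⟨as, h1, h2⟩ | ⟨as, h1, h2⟩
        · cases as with
          | nil => simp_all
          | cons x as =>
            simp only [List.cons_append, List.cons.injEq] at h2
            exact absurd (by rw [h1]; simp [h2.1]) (key l')
        · cases as with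
          | nil => simp_all
          | cons x as =>
            simp only [List.cons_append, List.cons.injEq] at h2
            exact absurd (by rw [h1]; simp [h2.1]) (key l)
      rw [hl _ _ _ ha hsub.1, hr _ _ _ (by omega) hsub.2]

/-- For the gap `(1, 0)`, the label `1` occurs exactly along the right spine. -/
lemma count_one_seq (t : BinaryTree Unit) : (seq t 1 0).count 1 = spine t := by
  induction t with
  | nil => simp [seq, spine]
  | node _ l r _ hr =>
    have : (seq l 1 1).count 1 = 0 := List.count_eq_zero.2 fun h => by
      have := le_of_mem_seq _ _ _ _ h; omega
    simp [seq, spine, this, hr]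

lemma divSeq_seq (t : BinaryTree Unit) : ∀ (P : List ℕ) (a b : ℕ) (Q : List ℕ),
    DivSeq (P ++ a :: b :: Q) → DivSeq (P ++ a :: (seq t a b ++ b :: Q)) := by
  induction t with
  | nil => intro P a b Q h; simpa [seq] using h
  | node _ l r hl hr =>
    intro P a b Q h
    have h1 := hl _ _ _ _ ((divSeq_insert _ _ _ _).2 h)
    have h2 := hr (P ++ a :: seq l a (a + b)) (a + b) b Q (by simpa using h1)
    simpa [seq] using h2

/-- Inserting the sum of two adjacent entries amounts to attaching a new leaf to the tree. -/
lemma exists_seq_insert (t : BinaryTree Unit) : ∀ (a b : ℕ) (P : List ℕ) (u v : ℕ) (Q : List ℕ),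
    a :: (seq t a b ++ [b]) = P ++ u :: v :: Q →
    ∃ t', a :: (seq t' a b ++ [b]) = P ++ u :: (u + v) :: v :: Q := by
  induction t with
  | nil =>
    intro a b P u v Q h
    have hlen := congrArg List.length h
    simp only [seq, List.nil_append, List.length_cons, List.length_append, List.length_nil] at hlen
    have hP : P = [] := List.length_eq_zero_iff.1 (by omega)
    have hQ : Q = [] := List.length_eq_zero_iff.1 (by omega)
    subst hP hQ
    simp only [seq, List.nil_append, List.cons.injEq] at h
    exact ⟨node () nil nil, by simp [seq, h]⟩
  | node _ l r hl hr =>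
    intro a b P u v Q h
    have h' : (a :: seq l a (a + b)) ++ ((a + b) :: (seq r (a + b) b ++ [b]))
        = P ++ u :: v :: Q := by simpa [seq] using h
    rcases List.append_eq_append_iff.1 h' with ⟨as, h1, h2⟩ | ⟨bs, h1, h2⟩
    · obtain ⟨r', hr'⟩ := hr _ _ _ _ _ _ h2
      exact ⟨node () l r', by
        rw [h1, List.append_assoc, ← hr']; simp [seq]⟩
    · rcases bs with _ | ⟨u', _ | ⟨v', bs⟩⟩
      · obtain ⟨r', hr'⟩ := hr _ _ [] _ _ _ h2.symm
        refine ⟨node () l r', ?_⟩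
        rw [List.append_nil] at h1
        rw [List.nil_append] at hr'
        rw [← h1, ← hr']; simp [seq]
      · simp only [List.cons_append, List.nil_append, List.cons.injEq] at h2
        obtain ⟨rfl, rfl, rfl⟩ := h2
        obtain ⟨l', hl'⟩ := hl a (a + b) P u (a + b) []
          (by rw [← List.cons_append, h1]; simp)
        refine ⟨node () l' r, ?_⟩
        have := congrArg (· ++ (seq r (a + b) b ++ [b])) hl'
        simpa [seq] using this
      · simp only [List.cons_append, List.cons.injEq] at h2
        obtain ⟨rfl, rfl, rfl⟩ := h2
        obtain ⟨l', hl'⟩ := hl a (a + b) P u v (bs ++ [a + b])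
          (by rw [← List.cons_append, h1]; simp)
        refine ⟨node () l' r, ?_⟩
        have := congrArg (· ++ (seq r (a + b) b ++ [b])) hl'
        simpa [seq] using this

lemma exists_last_max : ∀ xs : List ℕ, xs ≠ [] →
    ∃ P x Q, xs = P ++ x :: Q ∧ (∀ p ∈ P, p ≤ x) ∧ ∀ q ∈ Q, q < x
  | [], h => absurd rfl h
  | [y], _ => ⟨[], y, [], by simp⟩
  | y :: z :: ys, _ => by
    obtain ⟨P, x, Q, h, hP, hQ⟩ := exists_last_max (z :: ys) (by simp)
    by_cases hy : y ≤ x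
    · exact ⟨y :: P, x, Q, by simp [h], by simpa [hy] using hP, hQ⟩
    · refine ⟨[], y, z :: ys, by simp, by simp, fun q hq => ?_⟩
      rw [h] at hq
      simp only [List.mem_append, List.mem_cons] at hq
      rcases hq with hq | hq | hq
      · have := hP q hq; omega
      · omega
      · have := hQ q hq; omega

/-- The last occurrence `x` of the maximum exceeds its right neighbour and is at least its left
neighbour, so their sum, a positive multiple of `x` below `2 * x`, is `x` itself. Hence `x` can be
removed, and it corresponds to a leaf of the tree. -/
lemma exists_seq_eq : ∀ (m : ℕ) (xs : List ℕ), xs.length = m → (∀ x ∈ xs, 0 < x) →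
    DivSeq (1 :: (xs ++ [0])) → ∃ t, seq t 1 0 = xs := by
  intro m
  induction m with
  | zero =>
    intro xs h _ _
    exact ⟨nil, by rw [List.length_eq_zero_iff.1 h, seq]⟩
  | succ m ih =>
    intro xs hlen hpos hdiv
    obtain ⟨P, x, Q, rfl, hP, hQ⟩ := exists_last_max xs (by rintro rfl; simp at hlen)
    have hx : 0 < x := hpos x (by simp)
    obtain ⟨P', u, hu⟩ : ∃ P' u, 1 :: P = P' ++ [u] :=
      ⟨_, _, (List.dropLast_append_getLast (List.cons_ne_nil 1 P)).symm⟩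
    obtain ⟨v, Q', hv⟩ : ∃ v Q', Q ++ [0] = v :: Q' := by
      cases Q with
      | nil => exact ⟨0, [], rfl⟩
      | cons q Q => exact ⟨q, Q ++ [0], rfl⟩
    have humem : u ∈ 1 :: P := by rw [hu]; simp
    have hvmem : v ∈ Q ++ [0] := by rw [hv]; simp
    have hu1 : 0 < u ∧ u ≤ x := by
      rcases List.mem_cons.1 humem with rfl | h
      · omega
      · exact ⟨hpos u (by simp [h]), hP u h⟩
    have hv1 : v < x := by
      rcases List.mem_append.1 hvmem with h | h
      · exact hQ v h
      · simp at h; omega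
    have hfull : 1 :: ((P ++ x :: Q) ++ [0]) = P' ++ u :: x :: v :: Q' := by
      calc _ = (1 :: P) ++ x :: (Q ++ [0]) := by simp
        _ = _ := by rw [hu, hv]; simp
    have hrem : 1 :: ((P ++ Q) ++ [0]) = P' ++ u :: v :: Q' := by
      calc _ = (1 :: P) ++ (Q ++ [0]) := by simp
        _ = _ := by rw [hu, hv]; simp
    rw [hfull] at hdiv
    have hxd : x ∣ u + v := (DivSeq.of_append hdiv).1
    have hxe : x = u + v := by
      obtain ⟨c, hc⟩ := hxd
      have h1 : c < 2 := by by_contra hcon; nlinarith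
      have h2 : c ≠ 0 := by rintro rfl; omega
      have h3 : c = 1 := by omega
      subst h3; omega
    rw [hxe, divSeq_insert] at hdiv
    obtain ⟨t, ht⟩ := ih (P ++ Q) (by simp at hlen ⊢; omega)
      (fun y hy => hpos y (by simp at hy ⊢; tauto)) (by rw [hrem]; exact hdiv)
    obtain ⟨t', hfin⟩ := exists_seq_insert t 1 0 P' u v Q' (by rw [ht, hrem])
    refine ⟨t', ?_⟩
    rw [← hxe, ← hfull] at hfin
    simpa only [List.cons.injEq, true_and, List.append_cancel_right_eq] using hfin

/-! ### Counting trees by the length of the right spine -/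

/-- The binary trees with `m` nodes, `s` of which lie on the right spine. -/
def spineTrees (m s : ℕ) : Finset (BinaryTree Unit) :=
  (treesOfNumNodesEq m).filter fun t => spine t = s

lemma mem_spineTrees {m s : ℕ} {t : BinaryTree Unit} :
    t ∈ spineTrees m s ↔ t.numNodes = m ∧ spine t = s := by
  simp [spineTrees, mem_treesOfNumNodesEq]

lemma spine_le_numNodes (t : BinaryTree Unit) : spine t ≤ t.numNodes := by
  induction t with
  | nil => simp [spine]
  | node _ l r _ hr => simp only [spine, numNodes]; omega

lemma spineTrees_eq_empty {m s : ℕ} (h : m < s) : spineTrees m s = ∅ := by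
  ext t
  simp only [mem_spineTrees, Finset.notMem_empty, iff_false]
  rintro ⟨rfl, rfl⟩
  exact absurd (spine_le_numNodes t) (by omega)

lemma spineTrees_succ_zero (m : ℕ) : spineTrees (m + 1) 0 = ∅ := by
  ext t
  cases t <;> simp [mem_spineTrees, spine]

/-- Right rotation at the root, `(A △ B) △ C ↦ A △ (B △ C)`. -/
def rotR : BinaryTree Unit → BinaryTree Unit
  | node _ (node _ A B) C => node () A (node () B C)
  | t => t

/-- Left rotation at the root, `A △ (B △ C) ↦ (A △ B) △ C`. -/
def rotL : BinaryTree Unit → BinaryTree Unit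
  | node _ A (node _ B C) => node () (node () A B) C
  | t => t

/-- A tree whose root has no left child is determined by its right subtree; for the other trees
right rotation at the root lengthens the spine by one. -/
lemma card_spineTrees_succ (m s : ℕ) : (spineTrees (m + 1) (s + 1)).card =
    (spineTrees m s).card + (spineTrees (m + 1) (s + 2)).card := by
  rw [← Finset.card_filter_add_card_filter_not (s := spineTrees (m + 1) (s + 1))
    (fun t => t.left = nil)]
  congr 1
  · refine Finset.card_nbij' BinaryTree.right (fun t => node () nil t) ?_ ?_ ?_ ?_ <;>
      intro t h <;> rw [Finset.mem_coe] at h <;> try rw [Finset.mem_coe]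
    · rw [Finset.mem_filter, mem_spineTrees] at h
      rw [mem_spineTrees]
      rcases t with _ | ⟨_, l, r⟩
      · simp at h
      · obtain ⟨⟨h1, h2⟩, h3⟩ := h
        replace h3 : l = nil := h3
        subst h3
        simpa [spine] using And.intro h1 h2
    · rw [mem_spineTrees] at h
      rw [Finset.mem_filter, mem_spineTrees]
      simp [spine, h]
    · rw [Finset.mem_filter, mem_spineTrees] at h
      rcases t with _ | ⟨_, l, r⟩ <;> simp_all
    · simp
  · refine Finset.card_nbij' rotR rotL ?_ ?_ ?_ ?_ <;>
      intro t h <;> rw [Finset.mem_coe] at h <;> try rw [Finset.mem_coe]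
    · rw [Finset.mem_filter, mem_spineTrees] at h
      rw [mem_spineTrees]
      rcases t with _ | ⟨_, _ | ⟨_, A, B⟩, C⟩ <;> simp_all [spine, rotR]
      omega
    · rw [mem_spineTrees] at h
      rw [Finset.mem_filter, mem_spineTrees]
      rcases t with _ | ⟨_, A, _ | ⟨_, B, C⟩⟩ <;> simp_all [spine, rotL]
      omega
    · rw [Finset.mem_filter, mem_spineTrees] at h
      rcases t with _ | ⟨_, _ | ⟨_, A, B⟩, C⟩ <;> simp_all [rotR, rotL]
    · rw [mem_spineTrees] at h
      rcases t with _ | ⟨_, A, _ | ⟨_, B, C⟩⟩ <;> simp_all [spine, rotR, rotL]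

lemma card_spineTrees_self (s : ℕ) : (spineTrees s s).card = 1 := by
  induction s with
  | zero =>
    refine Finset.card_eq_one.2 ⟨nil, ?_⟩
    ext t
    cases t <;> simp [mem_spineTrees, spine]
  | succ s ih => rw [card_spineTrees_succ, ih, spineTrees_eq_empty (by omega)]; rfl

/-- The ballot numbers as differences of binomial coefficients. -/
lemma card_spineTrees_add_choose (j s : ℕ) :
    (spineTrees (s + j + 2) (s + 1)).card + (s + 2 * j + 2).choose j
      = (s + 2 * j + 2).choose (j + 1) := by
  induction j generalizing s with
  | zero =>
    induction s with
    | zero =>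
      rw [card_spineTrees_succ, spineTrees_succ_zero, card_spineTrees_self]; rfl
    | succ s ih =>
      have h1 : s + 1 + 0 + 2 = (s + 2) + 1 := by ring
      rw [h1, card_spineTrees_succ, card_spineTrees_self (s + 1 + 2)]
      simp at ih ⊢
      omega
  | succ j ihj =>
    induction s with
    | zero =>
      have h := ihj 1
      rw [show 0 + (j + 1) + 2 = (j + 2) + 1 by ring, card_spineTrees_succ, spineTrees_succ_zero]
      have e1 : 1 + j + 2 = j + 2 + 1 := by ring
      have e2 : 1 + 2 * j + 2 = 2 * j + 3 := by ring
      have e3 : 0 + 2 * (j + 1) + 2 = 2 * j + 3 + 1 := by ring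
      rw [e1, e2] at h
      rw [e3, Nat.choose_succ_succ (2 * j + 3) j, Nat.choose_succ_succ (2 * j + 3) (j + 1)]
      have hs : (2 * j + 3).choose (j + 1 + 1) = (2 * j + 3).choose (j + 1) :=
        Nat.choose_symm_of_eq_add (by ring)
      simp at h hs ⊢
      omega
    | succ s ihs =>
      have h := ihj (s + 2)
      rw [show s + 1 + (j + 1) + 2 = (s + (j + 1) + 2) + 1 by ring, card_spineTrees_succ]
      have e1 : s + 2 + j + 2 = s + (j + 1) + 2 + 1 := by ring
      have e2 : s + 2 + 2 * j + 2 = s + 2 * (j + 1) + 2 := by ring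
      have e3 : s + 1 + 2 * (j + 1) + 2 = s + 2 * (j + 1) + 2 + 1 := by ring
      rw [e1, e2] at h
      rw [e3, Nat.choose_succ_succ _ j, Nat.choose_succ_succ _ (j + 1)]
      rw [show s + 2 + 1 = s + 1 + 2 by ring] at h
      simp at h ihs ⊢
      omega

lemma mul_card_spineTrees (j s : ℕ) :
    (s + j + 1) * (spineTrees (s + j + 1) (s + 1)).card = (s + 1) * (s + 2 * j).choose j := by
  cases j with
  | zero => simp [card_spineTrees_self]
  | succ j =>
    have h := card_spineTrees_add_choose j s
    have e := Nat.choose_succ_right_eq (s + 2 * j + 2) j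
    rw [show s + 2 * j + 2 - j = s + j + 2 by omega] at e
    rw [show s + (j + 1) + 1 = s + j + 2 by ring, show s + 2 * (j + 1) = s + 2 * j + 2 by ring]
    nlinarith

/-! ### Arithmetical structures on paths as sequences of trees -/

/-- The sum of the neighbours of position `i` in a list, where missing neighbours count `0`. -/
def nbSum (L : List ℕ) (i : ℕ) : ℕ := (if 0 < i then L.getD (i - 1) 0 else 0) + L.getD (i + 1) 0

lemma getD_append_zero (L : List ℕ) (i : ℕ) : (L ++ [0]).getD i 0 = L.getD i 0 := by
  rcases lt_trichotomy i L.length with h | h | h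
  · rw [List.getD_append _ _ _ _ h]
  · subst h; simp
  · rw [List.getD_eq_default _ _ (by simpa using h), List.getD_eq_default _ _ h.le]

lemma getD_dvd_nbSum {xs : List ℕ} (h : DivSeq (1 :: (xs ++ [0]))) {i : ℕ}
    (hi : i < xs.length + 1) : (1 :: xs).getD i 0 ∣ nbSum (1 :: xs) i := by
  cases i with
  | zero => simp
  | succ i =>
    have := (divSeq_iff_getD _).1 h i (by simp; omega)
    rw [← List.cons_append] at this
    simpa only [getD_append_zero, nbSum, Nat.succ_pos, if_true, Nat.add_sub_cancel] using this

/-- The defining equation of an arithmetical structure in terms of `nbSum`. -/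
lemma nbSum_eq {n : ℕ} {r : Fin n → ℕ} {L : List ℕ} (hL : L.length = n)
    (hr : ∀ i : Fin n, r i = L.getD i 0) (i : Fin n) :
    (if 0 < i.val then r ⟨i.val - 1, Nat.lt_of_le_of_lt (Nat.sub_le _ _) i.isLt⟩ else 0) +
      (if h : i.val + 1 < n then r ⟨i.val + 1, h⟩ else 0) = nbSum L i := by
  rw [nbSum]
  congr 1
  · simp [hr]
  · split_ifs with h
    · rw [hr]
    · rw [List.getD_eq_default _ _ (by omega)]

lemma card_filter_eq_count : ∀ (L : List ℕ) (n : ℕ), L.length = n → ∀ r : Fin n → ℕ,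
    (∀ i : Fin n, r i = L.getD i 0) →
    (Finset.univ.filter fun i => r i = 1).card = L.count 1
  | [], _, rfl, r, _ => by simp
  | x :: L, _, rfl, r, hr => by
    have h0 : r 0 = x := by simpa using hr 0
    have hs := card_filter_eq_count L L.length rfl (fun i => r i.succ)
      (fun i => by simpa using hr i.succ)
    have h := Fin.card_filter_univ_succ' (n := L.length) (fun i => r i = 1)
    refine h.trans ?_
    rw [hs, h0, List.count_cons, add_comm]
    simp

/-- The list of an arithmetical structure starts with `1` because its first entry divides the
second and then, by the recurrence, all entries. -/
lemma exists_list_of_isArithPath {m : ℕ} {d r : Fin (m + 1) → ℕ} (h : IsArithPath (m + 1) d r) :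
    ∃ xs : List ℕ, xs.length = m ∧ (∀ i : Fin (m + 1), r i = (1 :: xs).getD i 0) ∧
      (∀ x ∈ xs, 0 < x) ∧ DivSeq (1 :: (xs ++ [0])) := by
  obtain ⟨-, hpos, hgcd, heq⟩ := h
  have hdvd : ∀ i, (hi : i < m + 1) → r 0 ∣ r ⟨i, hi⟩ := by
    intro i
    induction i using Nat.strong_induction_on with
    | _ i ih =>
      intro hi
      rcases i with _ | _ | i
      · exact dvd_refl _
      · have := heq 0
        simp only [Fin.val_zero, lt_irrefl, if_false, zero_add] at this
        rw [dif_pos (by simpa using hi)] at this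
        exact ⟨d 0, by rw [mul_comm]; exact this.symm⟩
      · have := heq ⟨i + 1, by omega⟩
        simp only [Nat.succ_pos, if_true] at this
        rw [dif_pos (by omega)] at this
        have h1 := ih (i + 1) (by omega) (by omega)
        have h0 := ih i (by omega) (by omega)
        exact (Nat.dvd_add_right h0).1 (this ▸ h1.mul_left _)
  have hr0 : r 0 = 1 := by
    have : r 0 ∣ Finset.univ.gcd r := Finset.dvd_gcd fun i _ => hdvd i i.2
    rw [hgcd] at this
    exact Nat.dvd_one.1 this
  have hr : ∀ i : Fin (m + 1), r i = (1 :: List.ofFn fun j : Fin m => r j.succ).getD i 0 := by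
    intro i
    refine Fin.cases ?_ (fun j => ?_) i
    · simpa using hr0
    · simp
  have hlen : (1 :: List.ofFn fun j : Fin m => r j.succ).length = m + 1 := by simp
  refine ⟨_, List.length_ofFn, hr, ?_, ?_⟩
  · intro x hx
    obtain ⟨j, rfl⟩ := (List.mem_ofFn' _ _).1 hx
    exact hpos _
  · rw [← List.cons_append, divSeq_iff_getD]
    intro i hi
    have hi' : i + 1 < m + 1 := by simp at hi; omega
    have e := heq ⟨i + 1, hi'⟩
    rw [nbSum_eq hlen hr, hr] at e
    simp only [getD_append_zero]
    simp only [nbSum, Nat.succ_pos, if_true, Nat.add_sub_cancel] at e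
    exact ⟨d ⟨i + 1, hi'⟩, by rw [mul_comm]; exact e.symm⟩

/-- The vector `r` read off from the list `1, seq t 1 0`. -/
def treeR (n : ℕ) (t : BinaryTree Unit) (i : Fin n) : ℕ := (1 :: seq t 1 0).getD i 0

/-- The vector `d` that belongs to `treeR`. -/
def treeD (n : ℕ) (t : BinaryTree Unit) (i : Fin n) : ℕ :=
  nbSum (1 :: seq t 1 0) i / (1 :: seq t 1 0).getD i 0

lemma getD_pos (t : BinaryTree Unit) {i : ℕ} (hi : i < t.numNodes + 1) :
    0 < (1 :: seq t 1 0).getD i 0 := by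
  rw [List.getD_eq_getElem _ _ (by simpa [length_seq] using hi)]
  have := List.getElem_mem (l := 1 :: seq t 1 0) (n := i) (by simpa [length_seq] using hi)
  rcases List.mem_cons.1 this with h | h
  · omega
  · have := le_of_mem_seq _ _ _ _ h; omega

lemma isArithPath_tree {m : ℕ} {t : BinaryTree Unit} (ht : t.numNodes = m + 1) :
    IsArithPath (m + 2) (treeD (m + 2) t) (treeR (m + 2) t) := by
  have hlen : (1 :: seq t 1 0).length = m + 2 := by simp [length_seq, ht]
  have hdvd : ∀ i : Fin (m + 2), (1 :: seq t 1 0).getD i 0 ∣ nbSum (1 :: seq t 1 0) i := fun i =>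
    getD_dvd_nbSum (divSeq_seq t [] 1 0 [] (by simp [DivSeq])) (by rw [length_seq, ht]; exact i.2)
  have hpos : ∀ i : Fin (m + 2), 0 < (1 :: seq t 1 0).getD i 0 := fun i =>
    getD_pos t (by rw [ht]; exact i.2)
  refine ⟨fun i => Nat.div_pos (Nat.le_of_dvd ?_ (hdvd i)) (hpos i), hpos, ?_, fun i => ?_⟩
  · rw [nbSum]
    split_ifs with h
    · exact Nat.add_pos_left (getD_pos t (by omega)) _
    · exact Nat.add_pos_right _ (getD_pos t (by omega))
  · refine Nat.dvd_one.1 ?_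
    have := Finset.gcd_dvd (f := treeR (m + 2) t) (Finset.mem_univ 0)
    simpa [treeR] using this
  · rw [nbSum_eq (r := treeR (m + 2) t) hlen (fun _ => rfl) i]
    exact Nat.div_mul_cancel (hdvd i)

lemma list_ext_getD {L L' : List ℕ} {n : ℕ} (h : L.length = n) (h' : L'.length = n)
    (he : ∀ i : Fin n, L.getD i 0 = L'.getD i 0) : L = L' := by
  refine List.ext_getElem (h.trans h'.symm) fun i h1 h2 => ?_
  have := he ⟨i, by omega⟩
  rwa [List.getD_eq_getElem _ _ h1, List.getD_eq_getElem _ _ h2] at this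

/-- Arithmetical structures on the path with `m + 2` vertices and `s + 1` entries equal to `1`
correspond to binary trees with `m + 1` nodes and right spine of length `s`. -/
lemma card_arithPath (m s : ℕ) :
    Nat.card {p : (Fin (m + 2) → ℕ) × (Fin (m + 2) → ℕ) // IsArithPath (m + 2) p.1 p.2 ∧
      (Finset.univ.filter fun i => p.2 i = 1).card = s + 1} = (spineTrees (m + 1) s).card := by
  have hcount : ∀ t : BinaryTree Unit, t.numNodes = m + 1 →
      (Finset.univ.filter fun i => treeR (m + 2) t i = 1).card = spine t + 1 := fun t ht => by
    rw [card_filter_eq_count (1 :: seq t 1 0) (m + 2) (by simp [length_seq, ht])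
      (treeR (m + 2) t) fun _ => rfl]
    simp [count_one_seq]
  let F : {t // t ∈ spineTrees (m + 1) s} →
      {p : (Fin (m + 2) → ℕ) × (Fin (m + 2) → ℕ) // IsArithPath (m + 2) p.1 p.2 ∧
        (Finset.univ.filter fun i => p.2 i = 1).card = s + 1} := fun t =>
    ⟨(treeD (m + 2) t.1, treeR (m + 2) t.1), isArithPath_tree (mem_spineTrees.1 t.2).1, by
      rw [hcount _ (mem_spineTrees.1 t.2).1, (mem_spineTrees.1 t.2).2]⟩
  have hF : Function.Bijective F := by
    constructor
    · rintro ⟨t, ht⟩ ⟨t', ht'⟩ h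
      rw [mem_spineTrees] at ht ht'
      have hR : treeR (m + 2) t = treeR (m + 2) t' := congrArg (fun p => p.1.2) h
      have := list_ext_getD (L := 1 :: seq t 1 0) (L' := 1 :: seq t' 1 0) (n := m + 2)
        (by simp [length_seq, ht.1]) (by simp [length_seq, ht'.1]) (fun i => congrFun hR i)
      exact Subtype.ext (seq_injective t t' 1 0 one_pos (List.cons.inj this).2)
    · rintro ⟨⟨d, r⟩, h, hc⟩
      obtain ⟨xs, hlen, hr, hpos, hdiv⟩ := exists_list_of_isArithPath h
      obtain ⟨t, rfl⟩ := exists_seq_eq _ xs rfl hpos hdiv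
      have ht : t.numNodes = m + 1 := by rw [← hlen, length_seq]
      have hR : treeR (m + 2) t = r := funext fun i => (hr i).symm
      have hD : treeD (m + 2) t = d := by
        funext i
        have e := h.2.2.2 i
        rw [nbSum_eq (by simp [length_seq, ht]) hr i] at e
        simp only at e
        rw [treeD, ← e, ← hr i, Nat.mul_div_cancel _ (h.2.1 i)]
      have hs : spine t = s := by
        have := hcount t ht
        rw [hR] at this
        simp only at hc
        omega
      exact ⟨⟨t, mem_spineTrees.2 ⟨ht, hs⟩⟩, Subtype.ext (Prod.ext hD hR)⟩
  rw [← Nat.card_congr (Equiv.ofBijective F hF)]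
  simp

end ArithPath

/-- For `n ≥ 2` and `1 ≤ k ≤ n`, the number of arithmetical structures `(d, r)` on
the path `P_n` with `r(1) = k` equals the ballot number `B(n-2, n-k)`. -/
theorem arith_path_count_r_ones (n k : ℕ) (hn : 2 ≤ n) (hk1 : 1 ≤ k) (hkn : k ≤ n) :
    Nat.card {p : (Fin n → ℕ) × (Fin n → ℕ) // IsArithPath n p.1 p.2 ∧
      (Finset.univ.filter fun i => p.2 i = 1).card = k} = ballot (n - 2) (n - k) := by
  obtain ⟨m, rfl⟩ := Nat.exists_eq_add_of_le' hn
  obtain ⟨s, rfl⟩ := Nat.exists_eq_add_of_le' hk1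
  rw [ArithPath.card_arithPath]
  rcases s with _ | s
  · simp [ArithPath.spineTrees_succ_zero, ballot]
  · obtain ⟨j, rfl⟩ : ∃ j, m = s + j := ⟨m - s, by omega⟩
    have h := ArithPath.mul_card_spineTrees j s
    rw [ballot, show s + j + 2 - (s + 1 + 1) = j by omega, Nat.add_sub_cancel,
      show s + j + 1 - j = s + 1 by omega, show s + j + j = s + 2 * j by ring,
      Nat.choose_symm_of_eq_add (show s + 2 * j = (s + j) + j by ring), ← h,
      Nat.mul_div_cancel_left _ (by omega)]
end

section
/- Let n ≥ 2 and let (d, r) be an arithmetical structure on the path P_n. Let A be the adjacency matrix of P_n (A_{ij} = 1 if |i−j| = 1 and A_{ij} = 0 otherwise) and let L = diag(d) − A, regarded as a ℤ-linear map ℤ^n → ℤ^n. Then the cokernel ℤ^n / L(ℤ^n) is isomorphic to ℤ; in particular its torsion subgroup (the critical group of the arithmetical structure) is trivial. -/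
/-- The adjacency matrix of the path `P_n`: `A i j = 1` iff `|i - j| = 1`. -/
def pathAdj (n : ℕ) : Matrix (Fin n) (Fin n) ℤ :=
  Matrix.of fun i j => if i.val + 1 = j.val ∨ j.val + 1 = i.val then 1 else 0

/-- The solution, started at `0`, of the three-term recurrence
`D i * x i - x (i - 1) - x (i + 1) = V i` (with `x (-1) = 0`): forward substitution in `L x = V`. -/
def pathSol (D V : ℕ → ℤ) : ℕ → ℤ
  | 0 => 0
  | 1 => -V 0
  | i + 2 => D (i + 1) * pathSol D V (i + 1) - pathSol D V i - V (i + 1)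

theorem path_mulVec (n : ℕ) (d x : Fin n → ℤ) (i : Fin n) :
    ((Matrix.diagonal d - pathAdj n).mulVec x) i = d i * x i -
      ((if 0 < i.val then x ⟨i.val - 1, Nat.lt_of_le_of_lt (Nat.sub_le _ _) i.isLt⟩ else 0) +
       (if h : i.val + 1 < n then x ⟨i.val + 1, h⟩ else 0)) := by
  rw [Matrix.sub_mulVec, Pi.sub_apply, Matrix.mulVec_diagonal]
  congr 1
  have key : ∀ j : Fin n, pathAdj n i j * x j =
      (if j.val + 1 = i.val then x j else 0) + (if i.val + 1 = j.val then x j else 0) := by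
    intro j
    simp only [pathAdj, Matrix.of_apply]
    split_ifs <;> omega
  simp only [Matrix.mulVec, dotProduct, key, Finset.sum_add_distrib]
  congr 1
  · split_ifs with h
    · rw [Finset.sum_eq_single ⟨i.val - 1, Nat.lt_of_le_of_lt (Nat.sub_le _ _) i.isLt⟩]
      · rw [if_pos]
        simp only
        omega
      · intro j _ hj
        rw [if_neg]
        intro h'
        apply hj
        ext
        simp only
        omega
      · simp
    · apply Finset.sum_eq_zero
      intro j _
      rw [if_neg]
      omega
  · split_ifs with h
    · rw [Finset.sum_eq_single ⟨i.val + 1, h⟩]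
      · simp
      · intro j _ hj
        rw [if_neg]
        intro h'
        apply hj
        ext
        simp only
        omega
      · simp
    · apply Finset.sum_eq_zero
      intro j _
      rw [if_neg]
      omega

theorem path_transpose (n : ℕ) (d : Fin n → ℤ) :
    (Matrix.diagonal d - pathAdj n).transpose = Matrix.diagonal d - pathAdj n := by
  rw [Matrix.transpose_sub, Matrix.diagonal_transpose]
  congr 1
  ext i j
  simp only [pathAdj, Matrix.transpose_apply, Matrix.of_apply, or_comm]

/-- The first entry of `r` divides all the others, hence is `1`. -/
theorem arith_path_first (n : ℕ) (d r : Fin n → ℕ) (h : IsArithPath n d r) (hn : 0 < n) :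
    r ⟨0, hn⟩ = 1 := by
  obtain ⟨-, -, hg, he⟩ := h
  have key : ∀ i : ℕ, ∀ hi : i < n, r ⟨0, hn⟩ ∣ r ⟨i, hi⟩ := by
    intro i
    induction i using Nat.strong_induction_on with
    | _ i ih =>
      intro hi
      match i, ih, hi with
      | 0, _, _ => exact dvd_rfl
      | 1, _, hi =>
        have := he ⟨0, hn⟩
        simp only [lt_irrefl, if_false, zero_add, hi, dite_true] at this
        exact this ▸ dvd_mul_left _ _
      | k + 2, ih, hi =>
        have := he ⟨k + 1, by omega⟩
        simp only [Nat.succ_pos, if_true, hi, dite_true, Nat.add_sub_cancel] at this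
        refine (Nat.dvd_add_right (ih k (by omega) (by omega))).1 ?_
        exact this ▸ (ih (k + 1) (by omega) (by omega)).mul_left _
  exact Nat.dvd_one.1 (hg ▸ Finset.dvd_gcd fun i _ => key i i.isLt)

theorem dot_path_mulVec (n : ℕ) (d r : Fin n → ℕ) (h : IsArithPath n d r) (x : Fin n → ℤ) :
    (fun i => (r i : ℤ)) ⬝ᵥ
      (Matrix.diagonal (fun i => (d i : ℤ)) - pathAdj n).mulVec x = 0 := by
  rw [Matrix.dotProduct_mulVec, ← Matrix.mulVec_transpose, path_transpose]
  have : (Matrix.diagonal (fun i => (d i : ℤ)) - pathAdj n).mulVec (fun i => (r i : ℤ)) = 0 := by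
    ext i
    rw [path_mulVec, Pi.zero_apply, sub_eq_zero]
    have := congrArg (Nat.cast : ℕ → ℤ) (h.2.2.2 i)
    push_cast at this
    rw [this]
    split_ifs <;> simp
  rw [this, zero_dotProduct]

/-- A vector orthogonal to `r` lies in the range of `L`. -/
theorem path_solve (n : ℕ) (d r : Fin n → ℕ) (h : IsArithPath n d r) (v : Fin n → ℤ)
    (hv : (fun i => (r i : ℤ)) ⬝ᵥ v = 0) :
    ∃ x, (Matrix.diagonal (fun i => (d i : ℤ)) - pathAdj n).mulVec x = v := by
  let D : ℕ → ℤ := fun i => if hi : i < n then d ⟨i, hi⟩ else 0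
  let V : ℕ → ℤ := fun i => if hi : i < n then v ⟨i, hi⟩ else 0
  let x : Fin n → ℤ := fun i => pathSol D V i
  refine ⟨x, ?_⟩
  set w := (Matrix.diagonal (fun i => (d i : ℤ)) - pathAdj n).mulVec x with hw
  have h1 : ∀ i : Fin n, i.val + 1 < n → w i = v i := by
    rintro ⟨i, hi⟩ hi'
    rw [hw, path_mulVec]
    simp only at hi'
    match i, hi, hi' with
    | 0, hi, hi' => simp [x, hi', pathSol, V, hi]
    | k + 1, hi, hi' =>
      simp only [x, hi', pathSol, V, D, hi, Nat.succ_pos, if_true, dite_true, Nat.add_sub_cancel]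
      ring
  have h2 : (fun i => (r i : ℤ)) ⬝ᵥ (w - v) = 0 := by
    rw [dotProduct_sub, hv, hw, dot_path_mulVec n d r h, sub_zero]
  ext i
  by_cases hi : i.val + 1 < n
  · exact h1 i hi
  · -- Here `i` is the last vertex, the only possible nonzero coordinate of `w - v`.
    rw [dotProduct, Finset.sum_eq_single i] at h2
    · have := (h.2.1 i).ne'
      rcases mul_eq_zero.1 h2 with h3 | h3
      · exact absurd (by exact_mod_cast h3) this
      · exact sub_eq_zero.1 h3
    · intro j _ hj
      have : j.val + 1 < n := by
        have := Fin.val_ne_of_ne hj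
        omega
      simp [h1 j this]
    · simp

/-- For any arithmetical structure `(d, r)` on the path `P_n` (`n ≥ 2`), the cokernel of
`L = diag(d) - A : ℤ^n → ℤ^n` is isomorphic to `ℤ`; in particular the critical group
(the torsion part of the cokernel) is trivial. -/
theorem arith_path_cokernel (n : ℕ) (hn : 2 ≤ n) (d r : Fin n → ℕ)
    (h : IsArithPath n d r) :
    Nonempty (((Fin n → ℤ) ⧸ LinearMap.range
      (Matrix.mulVecLin (Matrix.diagonal (fun i => (d i : ℤ)) - pathAdj n))) ≃ₗ[ℤ] ℤ) := by
  let φ : (Fin n → ℤ) →ₗ[ℤ] ℤ := dotProductBilin ℤ ℤ (fun i => (r i : ℤ))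
  have hφ : ∀ v, φ v = (fun i => (r i : ℤ)) ⬝ᵥ v := fun v => rfl
  have hker : LinearMap.range
      (Matrix.mulVecLin (Matrix.diagonal (fun i => (d i : ℤ)) - pathAdj n)) = LinearMap.ker φ := by
    ext v
    rw [LinearMap.mem_range, LinearMap.mem_ker, hφ]
    constructor
    · rintro ⟨x, rfl⟩
      exact dot_path_mulVec n d r h x
    · exact path_solve n d r h v
  have hsurj : Function.Surjective φ := by
    intro a
    refine ⟨Pi.single ⟨0, by omega⟩ a, ?_⟩
    rw [hφ, dotProduct_single, arith_path_first n d r h (by omega)]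
    simp
  rw [hker]
  exact ⟨φ.quotKerEquivOfSurjective hsurj⟩
end

section
/- Let n ≥ 2 and let (d, r) be an arithmetical structure on the path P_n. Then r(1) = 3n − 2 − (d_1 + d_2 + ⋯ + d_n). -/
/-- Splitting off the term at `k`; the remaining indices `{0, …, n} \ {k}` are enumerated
increasingly by `i ↦ if i < k then i else i + 1`. -/
lemma sum_range_delete (f : ℕ → ℤ) (k n : ℕ) (hk : k ≤ n) :
    ∑ i ∈ Finset.range (n + 1), f i =
      f k + ∑ i ∈ Finset.range n, f (if i < k then i else i + 1) := by
  induction n, hk using Nat.le_induction with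
  | base =>
    rw [Finset.sum_range_succ, add_comm]
    congr 1
    refine Finset.sum_congr rfl fun i hi => ?_
    rw [if_pos (Finset.mem_range.1 hi)]
  | succ n hn ih =>
    rw [Finset.sum_range_succ, ih, Finset.sum_range_succ, if_neg (by omega), add_assoc]

/-- The formula for a path with `n + 1` vertices. The label of vertex `i` is `r (i + 1)`, and
`r 0 = r (n + 2) = 0` are the labels of two phantom vertices, so that the defining equation takes
the same form at every vertex. The normalisation `r 1 = 1` replaces the gcd condition. -/
lemma arithPath_sum_aux (n : ℕ) : ∀ d r : ℕ → ℤ, r 0 = 0 → r (n + 2) = 0 → r 1 = 1 →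
    (∀ i ≤ n, 0 < r (i + 1)) → (∀ i ≤ n, d i * r (i + 1) = r i + r (i + 2)) →
    ∑ i ∈ Finset.range (n + 1), (d i + if r (i + 1) = 1 then 1 else 0) = 3 * (n : ℤ) + 1 := by
  induction n with
  | zero =>
    intro d r h0 h2 h1 _ he
    have := he 0 le_rfl
    simp_all
  | succ n ih =>
    intro d r h0 hend h1 hpos he
    -- the first position `k` of the maximum of the labels
    have hmax : ∃ k, k ≤ n + 1 ∧ ∀ j ≤ n + 1, r (j + 1) ≤ r (k + 1) := by
      obtain ⟨k, hk, hk'⟩ := Finset.exists_max_image (Finset.range (n + 2))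
        (fun j => r (j + 1)) ⟨0, by simp⟩
      exact ⟨k, by simpa [Nat.lt_succ_iff] using hk, fun j hj => hk' j (by simp; omega)⟩
    classical
    obtain ⟨k, ⟨hk, hkmax⟩, hfirst⟩ : ∃ k, (k ≤ n + 1 ∧ ∀ j ≤ n + 1, r (j + 1) ≤ r (k + 1)) ∧
        ∀ j < k, r (j + 1) < r (k + 1) := by
      refine ⟨Nat.find hmax, Nat.find_spec hmax, fun j hj => ?_⟩
      by_contra! hle
      have hs := Nat.find_spec hmax
      exact Nat.find_min hmax hj ⟨by omega, fun i hi => (hs.2 i hi).trans hle⟩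
    rcases Nat.eq_zero_or_pos k with rfl | hk0
    · -- the maximum is `r 1 = 1`, so all labels are `1`
      have hone : ∀ i ≤ n + 1, r (i + 1) = 1 := fun i hi => by
        have := hkmax i hi
        have := hpos i hi
        simp only [zero_add, h1] at *
        omega
      have hterm : ∀ i ∈ Finset.range (n + 1 + 1), (d i + if r (i + 1) = 1 then 1 else 0) =
          3 - (if i = 0 then 1 else 0) - (if i = n + 1 then (1 : ℤ) else 0) := by
        intro i hi
        have hi' : i ≤ n + 1 := by simpa [Nat.lt_succ_iff] using hi
        have hd := he i hi'
        rw [hone i hi', mul_one] at hd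
        have hl : r i = 1 - if i = 0 then 1 else 0 := by
          rcases i with _ | i
          · simp [h0]
          · simp [hone i (by omega)]
        have hr : r (i + 2) = 1 - if i = n + 1 then 1 else 0 := by
          split_ifs with h
          · rw [h]; simpa using hend
          · simpa using hone (i + 1) (by omega)
        rw [hone i hi', if_pos rfl, hd, hl, hr]
        ring
      rw [Finset.sum_congr rfl hterm, Finset.sum_sub_distrib, Finset.sum_sub_distrib,
        Finset.sum_ite_eq', Finset.sum_ite_eq']
      simp
      ring
    · obtain ⟨k, rfl⟩ : ∃ m, k = m + 1 := ⟨k - 1, by omega⟩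
      have hek := he (k + 1) hk
      have hM := hpos (k + 1) hk
      have hl := hpos k (by omega)
      have hlt := hfirst k (by omega)
      have hgt1 : 1 < r (k + 1 + 1) := by omega
      have hkn : k + 1 ≤ n := by
        by_contra hcon
        have hkeq : k = n := by omega
        subst hkeq
        -- at the last vertex the equation would make `r (k + 1)` a multiple of a larger number
        rw [hend, add_zero] at hek
        have : 0 < d (k + 1) := by
          by_contra! hneg
          nlinarith
        nlinarith
      have hrle := hkmax (k + 2) (by omega)
      have hrpos := hpos (k + 2) (by omega)
      have hd1 : d (k + 1) = 1 := by
        have hd_pos : 0 < d (k + 1) := by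
          by_contra! hneg
          nlinarith
        have hd_lt : d (k + 1) < 2 := by
          by_contra! hneg
          nlinarith
        omega
      rw [hd1, one_mul] at hek
      have key := ih
        (fun i => d (if i < k + 1 then i else i + 1) - (if i = k then 1 else 0)
          - (if i = k + 1 then 1 else 0))
        (fun i => r (if i < k + 2 then i else i + 1))
        (by simpa using h0) (by simpa [show ¬ n < k by omega] using hend) (by simpa using h1)
        (by
          intro i hi
          split_ifs
          · exact hpos i (by omega)
          · exact hpos (i + 1) (by omega))
        (by
          intro i hi
          have ha := he i (by omega)
          have hb := he (i + 1) (by omega)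
          rcases lt_trichotomy i k with h | rfl | h
          · simpa [show i < k + 1 by omega, show i < k + 2 by omega, h, h.ne,
              show i ≠ k + 1 by omega] using ha
          · simp
            linarith
          · rcases Nat.eq_or_lt_of_le (show k + 1 ≤ i from h) with rfl | h'
            · simp
              linarith
            · simpa [show ¬ i < k + 1 by omega, show ¬ i < k + 2 by omega, show ¬ i < k by omega,
                show i ≠ k by omega, show i ≠ k + 1 by omega] using hb)
      rw [sum_range_delete _ (k + 1) (n + 1) hk, hd1, if_neg hgt1.ne']
      have hterm : ∀ i ∈ Finset.range (n + 1),
          (d (if i < k + 1 then i else i + 1) +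
            if r ((if i < k + 1 then i else i + 1) + 1) = 1 then (1 : ℤ) else 0) =
          ((d (if i < k + 1 then i else i + 1) - (if i = k then 1 else 0)
            - (if i = k + 1 then 1 else 0)) +
            if r (if i + 1 < k + 2 then i + 1 else i + 1 + 1) = 1 then 1 else 0) +
          ((if i = k then 1 else 0) + (if i = k + 1 then 1 else 0)) := by
        intro i _
        have : (if i < k + 1 then i else i + 1) + 1 =
            if i + 1 < k + 2 then i + 1 else i + 1 + 1 := by split_ifs <;> omega
        rw [this]
        ring
      rw [Finset.sum_congr rfl hterm, Finset.sum_add_distrib, key, Finset.sum_add_distrib,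
        Finset.sum_ite_eq', Finset.sum_ite_eq', if_pos (by simp; omega), if_pos (by simp; omega)]
      push_cast
      ring

/-- For any arithmetical structure `(d, r)` on the path `P_n` (`n ≥ 2`),
`r(1) = 3n - 2 - (d_1 + ⋯ + d_n)`. -/
theorem arith_path_r_ones_eq (n : ℕ) (hn : 2 ≤ n) (d r : Fin n → ℕ)
    (h : IsArithPath n d r) :
    ((Finset.univ.filter fun i => r i = 1).card : ℤ) = 3 * n - 2 - ∑ i, (d i : ℤ) := by
  obtain ⟨_, hr, hg, he⟩ := h
  obtain ⟨n, rfl⟩ : ∃ m, n = m + 1 := ⟨n - 1, by omega⟩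
  -- `d` and `r` as sequences on `ℕ`, the latter shifted by one and padded by zeros
  let D : ℕ → ℤ := fun i => if h : i < n + 1 then (d ⟨i, h⟩ : ℤ) else 0
  let Rn : ℕ → ℕ := fun i => if h : 0 < i ∧ i - 1 < n + 1 then r ⟨i - 1, h.2⟩ else 0
  have hR : ∀ i (hi : i < n + 1), Rn (i + 1) = r ⟨i, hi⟩ := fun i hi => by
    simp [Rn, Nat.lt_succ_iff.1 hi]
  have hD : ∀ i (hi : i < n + 1), D i = d ⟨i, hi⟩ := fun i hi => dif_pos hi
  have hR0 : Rn 0 = 0 := by simp [Rn]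
  have hRe : Rn (n + 2) = 0 := by simp [Rn]
  have hE : ∀ i (hi : i < n + 1), d ⟨i, hi⟩ * Rn (i + 1) = Rn i + Rn (i + 2) := by
    intro i hi
    have := he ⟨i, hi⟩
    rw [hR i hi, this]
    congr 1
    · rcases i with _ | i
      · simp [hR0]
      · rw [hR i (by omega)]; simp
    · split_ifs with h
      · exact (hR (i + 1) h).symm
      · have : i = n := by simp at h; omega
        rw [this, hRe]
  -- the first label divides all labels
  have hdvd : ∀ i, i ≤ n + 1 → Rn 1 ∣ Rn i ∧ (i ≤ n → Rn 1 ∣ Rn (i + 1)) := by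
    intro i
    induction i with
    | zero => intro _; simp [hR0]
    | succ i ih =>
      intro hi
      obtain ⟨ha, hb⟩ := ih (by omega)
      have hb := hb (by omega)
      refine ⟨hb, fun _ => ?_⟩
      have := hE i (by omega)
      exact (Nat.dvd_add_right ha).1 (this ▸ hb.mul_left _)
  have hR1 : Rn 1 = 1 := by
    refine Nat.dvd_one.1 ((Finset.dvd_gcd fun i _ => ?_).trans hg.dvd)
    rw [← hR i.1 i.2]
    exact (hdvd _ (by omega)).1
  have key := arithPath_sum_aux n D (fun i => (Rn i : ℤ)) (by simp [hR0]) (by simp [hRe])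
    (by simp [hR1])
    (fun i hi => by
      have := hr ⟨i, by omega⟩
      rw [← hR i (by omega)] at this
      exact_mod_cast this)
    (fun i hi => by
      rw [hD i (by omega)]
      exact_mod_cast hE i (by omega))
  rw [Finset.sum_range] at key
  have hsum : ∀ i : Fin (n + 1), (D i + if ((Rn (i + 1) : ℕ) : ℤ) = 1 then (1 : ℤ) else 0) =
      (d i : ℤ) + if r i = 1 then 1 else 0 := by
    intro i
    rw [hD i.1 i.2, hR i.1 i.2]
    simp
  rw [Finset.sum_congr rfl fun i _ => hsum i, Finset.sum_add_distrib] at key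
  rw [Finset.card_filter]
  push_cast
  linarith
end

section
/- Let n ≥ 2 and let k be an integer. If 2n−2 ≤ k ≤ 3n−4, the number of arithmetical structures (d, r) on the path P_n with d_1 + ⋯ + d_n = k equals the ballot number B(n−2, k−2n+2); if k < 2n−2 or k > 3n−4, there are no arithmetical structures on P_n with d_1 + ⋯ + d_n = k. -/
/-! ### Ballot numbers -/

lemma ballot_zero_right (N : ℕ) : ballot N 0 = 1 := by
  simp [ballot]

lemma ballot_succ_add (N m : ℕ) (h : m ≤ N) :
    ballot N (m + 1) + (N + m + 1).choose m = (N + m + 1).choose (m + 1) := by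
  have h1 := Nat.choose_succ_right_eq (N + m + 1) m
  have h2 : N + m + 1 - m = N + 1 := by omega
  rw [h2] at h1
  have h3 : (N + (m + 1)).choose N = (N + m + 1).choose (m + 1) := by
    exact Nat.choose_symm_of_eq_add (n := N + (m + 1)) (a := N) (b := m + 1) rfl
  obtain ⟨e, rfl⟩ := Nat.exists_eq_add_of_le h
  have h4 : (m + e + m + 1).choose m ≤ (m + e + m + 1).choose (m + 1) := by
    by_contra hlt
    push Not at hlt
    nlinarith
  obtain ⟨c, hc⟩ := Nat.exists_eq_add_of_le h4
  have h5 : ballot (m + e) (m + 1) = c := by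
    unfold ballot
    rw [h3]
    apply Nat.div_eq_of_eq_mul_left (by omega)
    have : m + e + 1 - (m + 1) = e := by omega
    rw [this]
    rw [hc] at h1 ⊢
    nlinarith
  omega

lemma ballot_rec (N m : ℕ) (h : m ≤ N) :
    ballot (N + 1) (m + 1) = ballot (N + 1) m + ballot N (m + 1) := by
  have h1 := ballot_succ_add (N + 1) m (by omega)
  have h2 := ballot_succ_add N m h
  have e : N + 1 + m + 1 = (N + m + 1) + 1 := by omega
  rw [e, Nat.choose_succ_succ' (N + m + 1) m] at h1
  rcases m with _ | m
  · rw [ballot_zero_right]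
    simp at h1 h2 ⊢
    omega
  · have h3 := ballot_succ_add (N + 1) m (by omega)
    have e' : N + 1 + m + 1 = N + (m + 1) + 1 := by omega
    rw [e'] at h3
    rw [Nat.choose_succ_succ' (N + (m + 1) + 1) m] at h1
    omega

/-! ### Admissible lists and subdivision -/

/-- `Admissible a b L` says that the sequence starting with `a, b` and continued by
`r_{i+1} = x r_i - r_{i-1}`, with `x` running through `L`, is positive from `b` on until it reaches
`0`, which happens exactly at the end of `L`. -/
def Admissible : ℤ → ℤ → List ℤ → Prop
  | _, b, [] => b = 0
  | a, b, x :: L => 0 < b ∧ Admissible b (x * b - a) L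

/-- Subdivision: insert a `1` right after index `j`, raising the entry before it and (if there is
one) the entry after it by `1`. Only meaningful for `j < L.length`. -/
def insertOne : ℕ → List ℤ → List ℤ
  | _, [] => []
  | 0, [x] => [x + 1, 1]
  | 0, x :: y :: L => (x + 1) :: 1 :: (y + 1) :: L
  | j + 1, x :: L => x :: insertOne j L

/-- Inverse of subdivision: delete the entry at index `j + 1`, lowering its neighbours by `1`. -/
def deleteOne : ℕ → List ℤ → List ℤ
  | 0, [x, _] => [x - 1]
  | 0, x :: _ :: y :: L => (x - 1) :: (y - 1) :: L
  | j + 1, x :: L => x :: deleteOne j L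
  | _, L => L

lemma deleteOne_insertOne (j : ℕ) (L : List ℤ) (h : j < L.length) :
    deleteOne j (insertOne j L) = L := by
  induction j generalizing L with
  | zero =>
    match L with
    | [] => simp at h
    | [x] => simp [insertOne, deleteOne]
    | x :: y :: L => simp [insertOne, deleteOne]
  | succ j ih =>
    match L with
    | [] => simp at h
    | x :: L => simp [insertOne, deleteOne, ih L (by simpa using h)]

lemma insertOne_deleteOne (j : ℕ) (D E : List ℤ) (h : D.drop (j + 1) = 1 :: E) :
    insertOne j (deleteOne j D) = D := by
  induction j generalizing D with
  | zero =>
    match D with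
    | [] => simp at h
    | [x] => simp at h
    | [x, z] => simp at h; simp [insertOne, deleteOne, h]
    | x :: z :: y :: L => simp at h; simp [insertOne, deleteOne, h]
  | succ j ih =>
    match D with
    | [] => simp at h
    | x :: D => simp [insertOne, deleteOne, ih D (by simpa using h)]

lemma length_insertOne (j : ℕ) (L : List ℤ) (h : j < L.length) :
    (insertOne j L).length = L.length + 1 := by
  induction j generalizing L with
  | zero =>
    match L with
    | [] => simp at h
    | [x] => simp [insertOne]
    | x :: y :: L => simp [insertOne]
  | succ j ih =>
    match L with
    | [] => simp at h
    | x :: L => simp [insertOne, ih L (by simpa using h)]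

lemma length_deleteOne (j : ℕ) (L : List ℤ) (h : j + 1 < L.length) :
    (deleteOne j L).length + 1 = L.length := by
  induction j generalizing L with
  | zero =>
    match L with
    | [] => simp at h
    | [x] => simp at h
    | [x, y] => simp [deleteOne]
    | x :: z :: y :: L => simp [deleteOne]
  | succ j ih =>
    match L with
    | [] => simp at h
    | x :: L => simp [deleteOne, ih L (by simpa using h)]

lemma sum_insertOne (j : ℕ) (L : List ℤ) (h : j < L.length) :
    (insertOne j L).sum = L.sum + if j + 1 < L.length then 3 else 2 := by
  induction j generalizing L with
  | zero =>
    match L with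
    | [] => simp at h
    | [x] => simp [insertOne]; ring
    | x :: y :: L => simp [insertOne]; ring
  | succ j ih =>
    match L with
    | [] => simp at h
    | x :: L => simp [insertOne, ih L (by simpa using h)]; ring

lemma drop_insertOne (j : ℕ) (L : List ℤ) (h : j < L.length) :
    (insertOne j L).drop (j + 1) = 1 :: (L.drop (j + 1)).modifyHead (· + 1) := by
  induction j generalizing L with
  | zero =>
    match L with
    | [] => simp at h
    | [x] => simp [insertOne]
    | x :: y :: L => simp [insertOne]
  | succ j ih =>
    match L with
    | [] => simp at h
    | x :: L => simpa [insertOne] using ih L (by simpa using h)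

lemma admissible_insertOne (j : ℕ) (L : List ℤ) (h : j < L.length) (a b : ℤ) :
    Admissible a b (insertOne j L) ↔ Admissible a b L := by
  induction j generalizing L a b with
  | zero =>
    match L with
    | [] => simp at h
    | [x] =>
      simp only [insertOne, Admissible]
      constructor
      · rintro ⟨h1, h2, h3⟩
        exact ⟨h1, by linarith⟩
      · rintro ⟨h1, h2⟩
        exact ⟨h1, by linarith, by linarith⟩
    | x :: y :: L =>
      simp only [insertOne, Admissible]
      have e1 : 1 * ((x + 1) * b - a) - b = x * b - a := by ring
      have e2 : (y + 1) * (x * b - a) - ((x + 1) * b - a) = y * (x * b - a) - b := by ring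
      rw [e1, e2]
      constructor
      · rintro ⟨h1, h2, h3, h4⟩
        exact ⟨h1, h3, h4⟩
      · rintro ⟨h1, h3, h4⟩
        exact ⟨h1, by linarith, h3, h4⟩
  | succ j ih =>
    match L with
    | [] => simp at h
    | x :: L =>
      simp only [insertOne, Admissible]
      rw [ih L (by simpa using h)]

/-- With all entries at least `2`, a nondecreasing start keeps the sequence nondecreasing, so it
never returns to `0`. -/
lemma not_admissible_of_two_le (L : List ℤ) (a b : ℤ) (hb : 0 < b) (hab : a ≤ b)
    (h : ∀ y ∈ L, 2 ≤ y) : ¬ Admissible a b L := by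
  induction L generalizing a b with
  | nil => simp only [Admissible]; omega
  | cons x L ih =>
    rintro ⟨-, h2⟩
    have hx : 2 ≤ x := h x (by simp)
    have : b ≤ x * b - a := by nlinarith
    exact ih b (x * b - a) (by linarith) this (fun y hy => h y (by simp [hy])) h2

lemma Admissible.pos {L : List ℤ} {a b : ℤ} (hV : Admissible a b L) (ha : 0 ≤ a)
    (h : 0 < a ∨ 2 ≤ L.length) : ∀ y ∈ L, 0 < y := by
  induction L generalizing a b with
  | nil => simp
  | cons x L ih =>
    obtain ⟨hb, hV⟩ := hV
    have hx : 0 < x := by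
      by_contra hx
      have hxb : x * b ≤ 0 := by nlinarith
      match L, hV with
      | [], hV =>
        simp only [Admissible] at hV
        simp at h
        linarith
      | y :: L, hV =>
        have := hV.1
        linarith
    intro y hy
    rcases List.mem_cons.1 hy with rfl | hy
    · exact hx
    · exact ih hV hb.le (Or.inl hb) y hy

/-! ### Counting by the position of the last one -/

/-- Admissible lists of length `N + 2` and sum `s` all of whose entries at (0-based) indices
beyond `j` are at least `2`. -/
def T (N j : ℕ) (s : ℤ) : Set (List ℤ) :=
  {d | d.length = N + 2 ∧ Admissible 0 1 d ∧ d.sum = s ∧ ∀ y ∈ d.drop (j + 1), 2 ≤ y}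

lemma T_zero_right (N : ℕ) (s : ℤ) : T N 0 s = ∅ := by
  ext d
  simp only [T, Set.mem_ofPred_eq, Set.mem_empty_iff_false, iff_false]
  rintro ⟨hl, hV, -, h⟩
  have hp := hV.pos le_rfl (Or.inr (by omega))
  match d with
  | [] => simp at hl
  | x :: L =>
    have hx := hp x (by simp)
    have hV' := hV.2
    exact not_admissible_of_two_le L 1 (x * 1 - 0) (by linarith) (by linarith)
      (by simpa using h) hV'

lemma T_last (N : ℕ) (s : ℤ) : T N (N + 2) s = T N (N + 1) s := by
  ext d
  simp only [T, Set.mem_ofPred_eq]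
  refine and_congr_right fun hl => ?_
  rw [List.drop_eq_nil_of_le (by omega), List.drop_eq_nil_of_le (by omega)]

/-- If the last `1` is at index `j + 1`, it arises by subdivision; otherwise the list already
belongs to `T (N + 1) j s`. -/
lemma T_succ (N j : ℕ) (hj : j ≤ N + 1) (s : ℤ) :
    T (N + 1) (j + 1) s = T (N + 1) j s ∪
      insertOne j '' T N (j + 1) (s - if j ≤ N then 3 else 2) := by
  have hif : ∀ L : List ℤ, L.length = N + 2 →
      (if j + 1 < L.length then (3 : ℤ) else 2) = if j ≤ N then 3 else 2 := by
    intro L hL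
    congr 1
    rw [hL]
    simp only [eq_iff_iff]
    omega
  ext d
  constructor
  · rintro ⟨hl, hV, hs, h⟩
    have hlt : j + 1 < d.length := by omega
    have hdrop := List.drop_eq_getElem_cons hlt
    have hpos := hV.pos le_rfl (Or.inr (by omega)) _ (List.getElem_mem hlt)
    by_cases h1 : d[j + 1] = 1
    · right
      rw [h1] at hdrop
      have hins := insertOne_deleteOne j d _ hdrop
      have hlen := length_deleteOne j d hlt
      have hlen' : (deleteOne j d).length = N + 2 := by omega
      have hjl : j < (deleteOne j d).length := by omega
      refine ⟨deleteOne j d, ⟨hlen', ?_, ?_, ?_⟩, hins⟩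
      · rw [← admissible_insertOne j _ hjl, hins]; exact hV
      · have := sum_insertOne j _ hjl
        rw [hins, hs, hif _ hlen'] at this
        linarith
      · have hd := drop_insertOne j _ hjl
        rw [hins, hdrop] at hd
        have hd' := (List.cons.inj hd).2
        intro y hy
        apply h y
        rw [hd']
        rw [← List.drop_drop (i := 1) (j := j + 1)] at hy
        revert hy
        cases (deleteOne j d).drop (j + 1) <;> simp +contextual
    · left
      refine ⟨hl, hV, hs, ?_⟩
      rw [hdrop]
      intro y hy
      rcases List.mem_cons.1 hy with rfl | hy
      · omega
      · exact h y hy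
  · rintro (⟨hl, hV, hs, h⟩ | ⟨d, ⟨hl, hV, hs, h⟩, rfl⟩)
    · refine ⟨hl, hV, hs, fun y hy => h y ?_⟩
      rw [← List.drop_drop (i := 1) (j := j + 1)] at hy
      exact List.mem_of_mem_drop hy
    · have hjl : j < d.length := by omega
      refine ⟨by rw [length_insertOne j d hjl, hl], (admissible_insertOne j d hjl _ _).2 hV, ?_, ?_⟩
      · rw [sum_insertOne j d hjl, hs, hif d hl]; ring
      · have hpos := hV.pos le_rfl (Or.inr (by omega))
        have hd := drop_insertOne j d hjl
        rw [← List.drop_drop (i := 1) (j := j + 1), hd]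
        rw [← List.drop_drop (i := 1) (j := j + 1)] at h
        have hpos' : ∀ y ∈ d.drop (j + 1), 0 < y := fun y hy => hpos y (List.mem_of_mem_drop hy)
        revert h hpos'
        cases d.drop (j + 1) with
        | nil => simp
        | cons x L =>
          simp only [List.drop_succ_cons, List.drop_zero, List.modifyHead_cons, List.mem_cons,
            forall_eq_or_imp]
          rintro h ⟨hx, -⟩
          exact ⟨by omega, h⟩

lemma encard_T_succ (N j : ℕ) (hj : j ≤ N + 1) (s : ℤ) :
    (T (N + 1) (j + 1) s).encard = (T (N + 1) j s).encard +
      (T N (j + 1) (s - if j ≤ N then 3 else 2)).encard := by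
  rw [T_succ N j hj, Set.encard_union_eq, Set.InjOn.encard_image]
  · rintro d ⟨hl, -⟩ d' ⟨hl', -⟩ he
    rw [← deleteOne_insertOne j d (by omega), he, deleteOne_insertOne j d' (by omega)]
  · rw [Set.disjoint_left]
    rintro _ ⟨-, -, -, h⟩ ⟨d, ⟨hl, -⟩, rfl⟩
    rw [drop_insertOne j d (by omega)] at h
    have := h 1 (by simp)
    omega

lemma T_zero_one (s : ℤ) : T 0 1 s = if s = 2 then {[1, 1]} else ∅ := by
  have key : ∀ d : List ℤ, d.length = 2 → Admissible 0 1 d → d = [1, 1] := by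
    intro d hl hV
    have hp := hV.pos le_rfl (Or.inr (by omega))
    match d with
    | [x, y] =>
      simp only [Admissible] at hV
      have hx := hp x (by simp)
      have hy := hp y (by simp)
      obtain ⟨-, -, h⟩ := hV
      have h' : y * x = 1 := by linarith
      have hx1 : x = 1 := by nlinarith
      subst hx1
      simp; linarith
  ext d
  constructor
  · rintro ⟨hl, hV, hs, -⟩
    obtain rfl := key d (by omega) hV
    have : s = 2 := by rw [← hs]; rfl
    simp [this]
  · split_ifs with h
    · rintro rfl
      refine ⟨rfl, ?_, by rw [h]; rfl, by simp⟩
      simp [Admissible]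
    · simp

lemma encard_T (N j : ℕ) (hj : j ≤ N + 1) (s : ℤ) :
    (T N j s).encard = ((if s ≤ 3 * N + 2 ∧ 3 * N + 3 ≤ s + j then
      ballot N (s + j - 3 * N - 3).toNat else 0 : ℕ) : ℕ∞) := by
  induction N generalizing j s with
  | zero =>
    rcases j with _ | j
    · rw [T_zero_right, if_neg (by push_cast; omega)]; simp
    · obtain rfl : j = 0 := by omega
      rw [T_zero_one]
      by_cases h : s = 2
      · subst h
        simp [ballot]
      · rw [if_neg h, if_neg (by push_cast; omega)]; simp
  | succ N ihN =>
    induction j generalizing s with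
    | zero => rw [T_zero_right, if_neg (by push_cast; omega)]; simp
    | succ j ihj =>
      rw [encard_T_succ N j (by omega), ihj (by omega)]
      by_cases hjN : j ≤ N
      · rw [if_pos hjN, ihN (j + 1) (by omega), ← Nat.cast_add]
        congr 1
        by_cases hs : s ≤ 3 * N + 5 ∧ 3 * N + 5 ≤ s + j
        · rw [if_pos (c := s - 3 ≤ _ ∧ _) (by push_cast; omega),
            if_pos (c := s ≤ _ ∧ _ ≤ s + ((j + 1 : ℕ) : ℤ)) (by push_cast; omega)]
          obtain ⟨m, hm⟩ := Int.eq_ofNat_of_zero_le (a := s + j - 3 * N - 5) (by omega)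
          rcases m with _ | m
          · rw [if_neg (by push_cast; omega)]
            have e1 : (s + ↑(j + 1) - 3 * ↑(N + 1) - 3 : ℤ).toNat = 0 := by omega
            have e2 : (s - 3 + ↑(j + 1) - 3 * ↑N - 3 : ℤ).toNat = 0 := by omega
            rw [e1, e2, ballot_zero_right, ballot_zero_right]
          · rw [if_pos (by push_cast; omega)]
            have e1 : (s + ↑(j + 1) - 3 * ↑(N + 1) - 3 : ℤ).toNat = m + 1 := by omega
            have e2 : (s - 3 + ↑(j + 1) - 3 * ↑N - 3 : ℤ).toNat = m + 1 := by omega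
            have e3 : (s + ↑j - 3 * ↑(N + 1) - 3 : ℤ).toNat = m := by omega
            rw [e1, e2, e3, ballot_rec N m (by omega)]
        · rw [if_neg (by push_cast; omega), if_neg (by push_cast; omega),
            if_neg (by push_cast; omega)]
      · obtain rfl : j = N + 1 := by omega
        rw [if_neg hjN, T_last, ihN (N + 1) le_rfl, ← Nat.cast_add]
        congr 1
        by_cases hs : s ≤ 3 * N + 5 ∧ 2 * N + 4 ≤ s
        · obtain ⟨m, hm⟩ := Int.eq_ofNat_of_zero_le (a := s - 2 * N - 4) (by omega)
          rw [if_pos (c := s ≤ _ ∧ _ ≤ s + ((N + 1 + 1 : ℕ) : ℤ)) (by push_cast; omega)]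
          have e1 : (s + ↑(N + 1 + 1) - 3 * ↑(N + 1) - 3 : ℤ).toNat = m := by omega
          have e2 : (s - 2 + ↑(N + 1) - 3 * ↑N - 3 : ℤ).toNat = m := by omega
          rw [e1, e2]
          -- At the top value `s = 3N + 5` the second set is empty, matching `B(N, N + 1) = 0`.
          have hb : (if s - 2 ≤ 3 * (N : ℤ) + 2 ∧ 3 * (N : ℤ) + 3 ≤ s - 2 + ((N + 1 : ℕ) : ℤ) then
              ballot N m else 0) = ballot N m := by
            split_ifs with h
            · rfl
            · obtain rfl : m = N + 1 := by push_cast at h; omega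
              simp [ballot]
          rw [hb]
          rcases m with _ | m
          · rw [if_neg (by push_cast; omega), ballot_zero_right, ballot_zero_right]
          · rw [if_pos (by push_cast; omega)]
            have e3 : (s + ↑(N + 1) - 3 * ↑(N + 1) - 3 : ℤ).toNat = m := by omega
            rw [e3, ballot_rec N m (by omega)]
        · rw [if_neg (by push_cast; omega), if_neg (by push_cast; omega),
            if_neg (by push_cast; omega)]

/-! ### Arithmetical structures as admissible lists -/

lemma admissible_iff (L : List ℤ) (a b : ℤ) :
    Admissible a b L ↔ ∃ ρ : ℕ → ℤ, ρ 0 = a ∧ ρ 1 = b ∧ ρ (L.length + 1) = 0 ∧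
      ∀ (i : ℕ) (h : i < L.length), 0 < ρ (i + 1) ∧ ρ (i + 2) = L[i] * ρ (i + 1) - ρ i := by
  induction L generalizing a b with
  | nil =>
    constructor
    · intro h
      simp only [Admissible] at h
      exact ⟨fun i => if i = 0 then a else b, by simp, by simp, by simp [h], by simp⟩
    · rintro ⟨ρ, -, h1, h2, -⟩
      simp only [Admissible]
      simpa [h1] using h2
  | cons x L ih =>
    simp only [Admissible]
    rw [ih]
    constructor
    · rintro ⟨hb, ρ, h0, h1, h2, h3⟩
      refine ⟨fun i => if i = 0 then a else ρ (i - 1), by simp, by simp [h0], by simp [h2], ?_⟩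
      intro i hi
      rcases i with _ | i
      · simp [h0, h1, hb]
      · simpa using h3 i (by simpa using hi)
    · rintro ⟨ρ, h0, h1, h2, h3⟩
      have h30 := h3 0 (by simp)
      simp only [zero_add, List.getElem_cons_zero, h0, h1] at h30
      refine ⟨h30.1, fun i => ρ (i + 1), h1, h30.2, h2, fun i hi => ?_⟩
      exact h3 (i + 1) (by simpa using hi)

/-- The vector `r` as a sequence of integers, shifted by one and extended by `0` at both ends, so
that `extend r i` is `r_i` in the usual 1-based indexing. -/
def extend {n : ℕ} (r : Fin n → ℕ) (i : ℕ) : ℤ :=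
  if h : 0 < i ∧ i - 1 < n then (r ⟨i - 1, h.2⟩ : ℤ) else 0

lemma extend_succ {n : ℕ} (r : Fin n → ℕ) (i : Fin n) : extend r (i + 1) = r i := by
  simp [extend]

lemma extend_recursion {n : ℕ} {d r : Fin n → ℕ} (h : IsArithPath n d r) (i : Fin n) :
    extend r (i + 2) = d i * extend r (i + 1) - extend r i := by
  have h4 := h.2.2.2 i
  have e1 : ((if 0 < i.val then r ⟨i.val - 1, Nat.lt_of_le_of_lt (Nat.sub_le _ _) i.isLt⟩
      else 0 : ℕ) : ℤ) = extend r i := by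
    unfold extend
    by_cases hi : 0 < i.val
    · rw [if_pos hi, dif_pos ⟨hi, by omega⟩]
    · rw [if_neg hi, dif_neg (by omega)]; rfl
  have e2 : ((if h : i.val + 1 < n then r ⟨i.val + 1, h⟩ else 0 : ℕ) : ℤ) =
      extend r (i + 2) := by
    unfold extend
    by_cases hi : i.val + 1 < n
    · rw [dif_pos hi, dif_pos ⟨by omega, by omega⟩]; rfl
    · rw [dif_neg hi, dif_neg (by omega)]; rfl
  have h5 := congrArg (Nat.cast : ℕ → ℤ) h4
  rw [Nat.cast_add, e1, e2, Nat.cast_mul] at h5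
  rw [extend_succ, h5]
  ring

/-- By the recursion `r_1` divides every `r_i`, so the gcd condition forces `r_1 = 1`. -/
lemma extend_one {n : ℕ} {d r : Fin n → ℕ} (hn : 0 < n) (h : IsArithPath n d r) :
    extend r 1 = 1 := by
  have hdvd : ∀ i : ℕ, i ≤ n → extend r 1 ∣ extend r i ∧ extend r 1 ∣ extend r (i + 1) := by
    intro i
    induction i with
    | zero => intro _; simp [extend]
    | succ i ih =>
      intro hi
      obtain ⟨h1, h2⟩ := ih (by omega)
      refine ⟨h2, ?_⟩
      have := extend_recursion h ⟨i, by omega⟩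
      simp only at this
      rw [show i + 1 + 1 = i + 2 by rfl, this]
      exact dvd_sub (h2.mul_left _) h1
  have e : extend r 1 = r ⟨0, hn⟩ := extend_succ r ⟨0, hn⟩
  have : r ⟨0, hn⟩ ∣ Finset.univ.gcd r := by
    apply Finset.dvd_gcd
    intro i _
    have h2 := (hdvd i i.isLt.le).2
    rw [e, extend_succ] at h2
    exact_mod_cast h2
  rw [h.2.2.1] at this
  rw [e, Nat.dvd_one.1 this]
  rfl

lemma IsArithPath.right_unique {n : ℕ} {d r r' : Fin n → ℕ} (h : IsArithPath n d r)
    (h' : IsArithPath n d r') : r = r' := by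
  have key : ∀ i : ℕ, i < n → extend r i = extend r' i ∧ extend r (i + 1) = extend r' (i + 1) := by
    intro i
    induction i with
    | zero =>
      intro hi
      refine ⟨by simp [extend], ?_⟩
      rw [extend_one hi h, extend_one hi h']
    | succ i ih =>
      intro hi
      obtain ⟨h1, h2⟩ := ih (by omega)
      refine ⟨h2, ?_⟩
      have e1 := extend_recursion h ⟨i, by omega⟩
      have e2 := extend_recursion h' ⟨i, by omega⟩
      simp only at e1 e2
      rw [show i + 1 + 1 = i + 2 by rfl, e1, e2, h1, h2]
  ext i
  have := (key i i.isLt).2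
  rw [extend_succ, extend_succ] at this
  exact_mod_cast this

/-- The vector `d` as a list of integers. -/
def toList {n : ℕ} (d : Fin n → ℕ) : List ℤ := List.ofFn fun i => (d i : ℤ)

lemma toList_mem_T {N : ℕ} {d r : Fin (N + 2) → ℕ} (h : IsArithPath (N + 2) d r) {k : ℤ}
    (hk : ∑ i, (d i : ℤ) = k) : toList d ∈ T N (N + 1) k := by
  refine ⟨by simp [toList], ?_, by rw [toList, List.sum_ofFn, hk], ?_⟩
  · rw [admissible_iff]
    refine ⟨extend r, by simp [extend], extend_one (by omega) h, by simp [toList, extend], ?_⟩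
    intro i hi
    have hi' : i < N + 2 := by rwa [toList, List.length_ofFn] at hi
    have h1 := extend_succ r ⟨i, hi'⟩
    have h2 := extend_recursion h ⟨i, hi'⟩
    have h3 := h.2.1 ⟨i, hi'⟩
    simp only at h1 h2
    refine ⟨by rw [h1]; exact_mod_cast h3, ?_⟩
    simp only [toList, List.getElem_ofFn]
    exact h2
  · rw [List.drop_eq_nil_of_le (by simp [toList])]
    simp

lemma exists_of_mem_T {N : ℕ} {k : ℤ} {L : List ℤ} (hL : L ∈ T N (N + 1) k) :
    ∃ d r : Fin (N + 2) → ℕ, (IsArithPath (N + 2) d r ∧ ∑ i, (d i : ℤ) = k) ∧ toList d = L := by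
  obtain ⟨hl, hV, hs, -⟩ := hL
  have hp := hV.pos le_rfl (Or.inr (by omega))
  obtain ⟨ρ, h0, h1, hend, hrec⟩ := (admissible_iff L 0 1).1 hV
  have hd : ∀ i : Fin (N + 2), 0 < L[i.val] := fun i => hp _ (List.getElem_mem _)
  have hlist : toList (fun i : Fin (N + 2) => (L[i.val]).toNat) = L := by
    apply List.ext_getElem
    · simp [toList, hl]
    · intro i hi hi'
      have := hp _ (List.getElem_mem hi')
      simp only [toList, List.getElem_ofFn]
      omega
  refine ⟨fun i => (L[i.val]).toNat, fun i => (ρ (i + 1)).toNat, ⟨⟨?_, ?_, ?_, ?_⟩, ?_⟩, hlist⟩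
  · intro i
    have := hd i
    simp only
    omega
  · intro i
    have := (hrec i (by omega)).1
    simp only
    omega
  · have : Finset.univ.gcd (fun i : Fin (N + 2) => (ρ (i + 1)).toNat) ∣ 1 := by
      have := Finset.gcd_dvd (f := fun i : Fin (N + 2) => (ρ (i + 1)).toNat) (Finset.mem_univ 0)
      simpa [h1] using this
    exact Nat.dvd_one.1 this
  · intro i
    obtain ⟨hr1, hr2⟩ := hrec i (by omega)
    have hdi := hd i
    have e1 : ((if 0 < i.val then (ρ (i.val - 1 + 1)).toNat else 0 : ℕ) : ℤ) = ρ i := by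
      by_cases hi : 0 < i.val
      · have := (hrec (i - 1) (by omega)).1
        rw [Nat.sub_add_cancel hi] at this ⊢
        rw [if_pos hi]
        omega
      · have hi0 : i.val = 0 := by omega
        rw [if_neg hi, hi0, h0]; rfl
    have e2 : ((if i.val + 1 < N + 2 then (ρ (i.val + 1 + 1)).toNat else 0 : ℕ) : ℤ) =
        ρ (i + 2) := by
      by_cases hi : i.val + 1 < N + 2
      · have := (hrec (i + 1) (by omega)).1
        rw [if_pos hi]
        simp only [add_assoc] at this ⊢
        norm_num at this ⊢
        omega
      · rw [if_neg hi]
        have : i.val + 2 = L.length + 1 := by omega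
        rw [this, hend]; rfl
    have e3 : (((L[i.val]).toNat * (ρ (i.val + 1)).toNat : ℕ) : ℤ) = L[i.val] * ρ (i + 1) := by
      rw [Nat.cast_mul, Int.toNat_of_nonneg hdi.le, Int.toNat_of_nonneg hr1.le]
    simp only [dite_eq_ite]
    zify at e1 e2 e3 ⊢
    rw [e1, e2, e3, hr2]
    ring
  · have := congrArg List.sum hlist
    rw [toList, List.sum_ofFn, hs] at this
    exact this

lemma card_eq_ncard_T (N : ℕ) (k : ℤ) :
    Nat.card {p : (Fin (N + 2) → ℕ) × (Fin (N + 2) → ℕ) // IsArithPath (N + 2) p.1 p.2 ∧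
        ∑ i, (p.1 i : ℤ) = k} = (T N (N + 1) k).ncard := by
  rw [← Nat.card_coe_set_eq]
  refine Nat.card_congr (Equiv.ofBijective
    (fun p => ⟨toList p.1.1, toList_mem_T p.2.1 p.2.2⟩) ⟨?_, ?_⟩)
  · rintro ⟨⟨d, r⟩, h, hk⟩ ⟨⟨d', r'⟩, h', hk'⟩ he
    have he' : toList d = toList d' := congrArg Subtype.val he
    have hdd : d = d' := by
      funext i
      have := congrFun (List.ofFn_injective he') i
      exact_mod_cast this
    subst hdd
    obtain rfl := h.right_unique h'
    rfl
  · rintro ⟨L, hL⟩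
    obtain ⟨d, r, h, rfl⟩ := exists_of_mem_T hL
    exact ⟨⟨(d, r), h⟩, rfl⟩

/-- For `n ≥ 2` and an integer `k`: if `2n - 2 ≤ k ≤ 3n - 4` then the number of
arithmetical structures `(d, r)` on `P_n` with `d_1 + ⋯ + d_n = k` equals
`B(n-2, k-2n+2)`; if `k < 2n - 2` or `k > 3n - 4` then there are none. -/
theorem arith_path_count_d_sum (n : ℕ) (hn : 2 ≤ n) (k : ℤ) :
    ((2 * (n : ℤ) - 2 ≤ k ∧ k ≤ 3 * (n : ℤ) - 4) →
      Nat.card {p : (Fin n → ℕ) × (Fin n → ℕ) // IsArithPath n p.1 p.2 ∧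
        ∑ i, (p.1 i : ℤ) = k} = ballot (n - 2) (k - 2 * (n : ℤ) + 2).toNat) ∧
    ((k < 2 * (n : ℤ) - 2 ∨ k > 3 * (n : ℤ) - 4) →
      ¬ ∃ d r : Fin n → ℕ, IsArithPath n d r ∧ ∑ i, (d i : ℤ) = k) := by
  obtain ⟨N, rfl⟩ : ∃ N, n = N + 2 := ⟨n - 2, by omega⟩
  have hT := encard_T N (N + 1) le_rfl k
  constructor
  · intro hk
    rw [if_pos (by push_cast at hk ⊢; omega)] at hT
    rw [card_eq_ncard_T, Set.ncard, hT, ENat.toNat_natCast]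
    congr 2
    push_cast
    ring
  · rintro hk ⟨d, r, h, hs⟩
    rw [if_neg (by push_cast at hk ⊢; omega), Nat.cast_zero, Set.encard_eq_zero] at hT
    have := toList_mem_T h hs
    rw [hT] at this
    exact this
end

section
/- If r = (r_1, …, r_n) is an arithmetical r-structure on the path P_n with n ≥ 2, then r_1 = r_n = 1. Moreover, if r_j = 1 for some 1 < j < n, then (r_1, …, r_j) is an arithmetical r-structure on the path P_j and (r_j, …, r_n) is an arithmetical r-structure on the path P_{n−j+1}. -/
/-- The vector `r` extended by zero, so that the right-hand boundary case of the relations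
disappears. -/
def extendZero {n : ℕ} (r : Fin n → ℕ) (k : ℕ) : ℕ := if h : k < n then r ⟨k, h⟩ else 0

theorem extendZero_of_lt {n : ℕ} (r : Fin n → ℕ) {k : ℕ} (h : k < n) :
    extendZero r k = r ⟨k, h⟩ := dif_pos h

theorem rel_zero {n : ℕ} {d r : Fin n → ℕ} (H : IsArithPath n d r) (h : 0 < n) :
    d ⟨0, h⟩ * extendZero r 0 = extendZero r 1 := by
  have := H.2.2.2 ⟨0, h⟩
  simpa [extendZero, h] using this

theorem rel_succ {n : ℕ} {d r : Fin n → ℕ} (H : IsArithPath n d r) {k : ℕ} (h : k + 1 < n) :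
    d ⟨k + 1, h⟩ * extendZero r (k + 1) = extendZero r k + extendZero r (k + 2) := by
  have := H.2.2.2 ⟨k + 1, h⟩
  have hk : k < n := by omega
  simpa [extendZero, h, hk] using this

theorem first_dvd {n : ℕ} {d r : Fin n → ℕ} (H : IsArithPath n d r) (k : ℕ) (hk : k < n) :
    extendZero r 0 ∣ extendZero r k ∧ extendZero r 0 ∣ extendZero r (k + 1) := by
  induction k with
  | zero => exact ⟨dvd_rfl, Dvd.intro_left _ (rel_zero H hk)⟩
  | succ k ih =>
    obtain ⟨h1, h2⟩ := ih (by omega)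
    refine ⟨h2, (Nat.dvd_add_right h1).1 ?_⟩
    rw [← rel_succ H hk]
    exact h2.mul_left _

/-- Downward analogue of `first_dvd`; the second conjunct at `k = 0` concerns the zero beyond the
last vertex. -/
theorem last_dvd {m : ℕ} {d r : Fin (m + 1) → ℕ} (H : IsArithPath (m + 1) d r) (k l : ℕ)
    (hk : k + l = m) :
    extendZero r m ∣ extendZero r l ∧ extendZero r m ∣ extendZero r (l + 1) := by
  induction k generalizing l with
  | zero =>
    obtain rfl : l = m := by omega
    exact ⟨dvd_rfl, by simp [extendZero]⟩
  | succ k ih =>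
    obtain ⟨h1, h2⟩ := ih (l + 1) (by omega)
    refine ⟨(Nat.dvd_add_left h2).1 ?_, h1⟩
    rw [← rel_succ H (by omega)]
    exact h1.mul_left _

theorem eq_one_of_dvd_all {n : ℕ} {d r : Fin n → ℕ} (H : IsArithPath n d r) (c : ℕ)
    (hc : ∀ i, c ∣ r i) : c = 1 := by
  have : c ∣ Finset.univ.gcd r := Finset.dvd_gcd fun i _ => hc i
  rwa [H.2.2.1, Nat.dvd_one] at this

theorem gcd_eq_one_of_entry {n : ℕ} (r : Fin n → ℕ) (i : Fin n) (hi : r i = 1) :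
    Finset.univ.gcd r = 1 := by
  have : Finset.univ.gcd r ∣ r i := Finset.gcd_dvd (Finset.mem_univ i)
  rwa [hi, Nat.dvd_one] at this

/-- If `r` is an arithmetical `r`-structure on `P_n` (`n ≥ 2`), then the first and last
entries of `r` are `1`.  Moreover, if an interior entry `r_j = 1`, then the prefix
`(r_0, …, r_j)` is an arithmetical `r`-structure on `P_{j+1}` and the suffix
`(r_j, …, r_{n-1})` is an arithmetical `r`-structure on `P_{n-j}`. -/
theorem arith_path_r_ends_one_and_split (n : ℕ) (hn : 2 ≤ n) (r : Fin n → ℕ)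
    (h : ∃ d, IsArithPath n d r) :
    r ⟨0, by omega⟩ = 1 ∧ r ⟨n - 1, by omega⟩ = 1 ∧
    ∀ j : Fin n, 0 < j.val → j.val < n - 1 → r j = 1 →
      (∃ d', IsArithPath (j.val + 1) d'
        (fun i : Fin (j.val + 1) => r ⟨i.val, Nat.lt_of_lt_of_le i.isLt j.isLt⟩)) ∧
      (∃ d'', IsArithPath (n - j.val) d''
        (fun i : Fin (n - j.val) => r ⟨j.val + i.val, by have := i.isLt; omega⟩)) := by
  obtain ⟨d, H⟩ := h
  refine ⟨eq_one_of_dvd_all H _ fun i => ?_, eq_one_of_dvd_all H _ fun i => ?_, ?_⟩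
  · have := (first_dvd H i i.isLt).1
    rwa [extendZero_of_lt r (by omega), extendZero_of_lt r i.isLt] at this
  · obtain ⟨m, rfl⟩ : ∃ m, n = m + 1 := ⟨n - 1, by omega⟩
    have := (last_dvd H (m - i) i (by omega)).1
    rwa [extendZero_of_lt r (by omega), extendZero_of_lt r i.isLt] at this
  · intro j hj0 hjn hj
    obtain ⟨hd, hr, -, he⟩ := H
    refine ⟨⟨fun i => if i.val = j.val then r ⟨j.val - 1, by omega⟩ else d ⟨i.val, by omega⟩,
      fun i => ?_, fun i => hr _,
      gcd_eq_one_of_entry _ ⟨j.val, by omega⟩ hj, fun i => ?_⟩,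
      ⟨fun i => if i.val = 0 then r ⟨j.val + 1, by omega⟩ else d ⟨j.val + i.val, by omega⟩,
      fun i => ?_, fun i => hr _,
      gcd_eq_one_of_entry _ ⟨0, by omega⟩ hj, fun i => ?_⟩⟩
    · dsimp only
      split_ifs
      exacts [hr _, hd _]
    · obtain ⟨i, hi⟩ := i
      by_cases hij : i = j.val
      · subst hij
        simp [hj, hj0]
      · have hlt : i < j.val := by omega
        have h1 : i + 1 < n := by omega
        have := he ⟨i, by omega⟩
        simpa [hij, hlt, h1] using this
    · dsimp only
      split_ifs
      exacts [hr _, hd _]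
    · obtain ⟨i, hi⟩ := i
      by_cases hi0 : i = 0
      · subst hi0
        have h1 : 1 < n - j.val := by omega
        simp [hj, h1]
      · have := he ⟨j.val + i, by omega⟩
        have hpos : 0 < i := by omega
        have hsub : j.val + i - 1 = j.val + (i - 1) := by omega
        have hiff : j.val + (i + 1) < n ↔ i + 1 < n - j.val := by omega
        simp only [hi0, hpos, if_true, if_false, Nat.add_pos_right, hsub] at this ⊢
        simpa only [add_assoc, hiff] using this
end

section
/- Let n ≥ 2 and let r = (r_1, …, r_n) be a vector of positive integers with gcd(r_1, …, r_n) = 1. Then r is an arithmetical r-structure on the path P_n if and only if r_1 = r_n = 1 and r_i divides r_{i−1} + r_{i+1} for all 2 ≤ i ≤ n−1. -/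
/-- A primitive positive integer vector `r` is an arithmetical `r`-structure on the
path `P_n` (`n ≥ 2`) iff its first and last entries are `1` and each interior entry
`r_i` divides `r_{i-1} + r_{i+1}`. -/
theorem arith_path_r_characterization (n : ℕ) (hn : 2 ≤ n) (r : Fin n → ℕ)
    (hpos : ∀ i, 0 < r i) (hgcd : Finset.univ.gcd r = 1) :
    (∃ d, IsArithPath n d r) ↔
      (r ⟨0, by omega⟩ = 1 ∧ r ⟨n - 1, by omega⟩ = 1 ∧
        ∀ i : Fin n, ∀ _h1 : 0 < i.val, ∀ h2 : i.val < n - 1,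
          r i ∣ r ⟨i.val - 1, Nat.lt_of_le_of_lt (Nat.sub_le _ _) i.isLt⟩ +
                r ⟨i.val + 1, by omega⟩) := by
  constructor
  · rintro ⟨d, -, -, -, heq⟩
    have hone : ∀ a, (∀ i, a ∣ r i) → a = 1 := fun a ha =>
      Nat.dvd_one.mp (hgcd ▸ Finset.dvd_gcd fun i _ => ha i)
    refine ⟨hone _ ?_, hone _ ?_, ?_⟩
    · have key : ∀ k (hk : k < n), r ⟨0, by omega⟩ ∣ r ⟨k, hk⟩ := by
        intro k
        induction k using Nat.strong_induction_on with
        | _ k ih =>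
          intro hk
          rcases k with _ | k
          · exact dvd_rfl
          have e := heq ⟨k, by omega⟩
          have h1 := (ih k (by omega) (by omega)).mul_left (d ⟨k, by omega⟩)
          rw [e] at h1
          simp only [hk, dif_pos] at h1
          refine (Nat.dvd_add_right ?_).mp h1
          split_ifs
          · exact ih _ (by omega) _
          · exact dvd_zero _
      exact fun i => key i.1 i.2
    · have key : ∀ k (hk : k < n), r ⟨n - 1, by omega⟩ ∣ r ⟨n - 1 - k, by omega⟩ := by
        intro k
        induction k using Nat.strong_induction_on with
        | _ k ih =>
          intro hk
          rcases k with _ | k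
          · exact dvd_rfl
          have e := heq ⟨n - 1 - k, by omega⟩
          have h1 := (ih k (by omega) (by omega)).mul_left (d ⟨n - 1 - k, by omega⟩)
          rw [e] at h1
          have hp : 0 < n - 1 - k := by omega
          simp only [hp, if_true] at h1
          refine (Nat.dvd_add_left ?_).mp h1
          split_ifs with h
          · have := ih (k - 1) (by omega) (by omega)
            convert this using 3
            omega
          · exact dvd_zero _
      intro i
      have := key (n - 1 - i.1) (by omega)
      convert this using 2
      ext
      simp only
      omega
    · intro i h1 h2
      have e := heq i
      have h3 : i.val + 1 < n := by omega
      rw [if_pos h1, dif_pos h3] at e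
      exact ⟨d i, by rw [← e, mul_comm]⟩
  · rintro ⟨h0, hl, hdiv⟩
    have hd : ∀ i : Fin n, ∃ c, 0 < c ∧ c * r i =
        (if 0 < i.val then r ⟨i.val - 1, Nat.lt_of_le_of_lt (Nat.sub_le _ _) i.isLt⟩ else 0) +
        (if h : i.val + 1 < n then r ⟨i.val + 1, h⟩ else 0) := by
      intro i
      by_cases h1 : 0 < i.val
      · by_cases h2 : i.val + 1 < n
        · obtain ⟨c, hc⟩ := hdiv i h1 (by omega)
          rw [if_pos h1, dif_pos h2]
          refine ⟨c, Nat.pos_of_ne_zero ?_, by rw [hc, mul_comm]⟩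
          rintro rfl
          have := hpos ⟨i.val + 1, h2⟩
          omega
        · have hi : r i = 1 := by
            rw [← hl]
            congr 1
            ext
            simp only
            omega
          rw [if_pos h1, dif_neg h2, hi]
          exact ⟨r ⟨i.val - 1, by omega⟩, hpos _, by simp⟩
      · have h2 : i.val + 1 < n := by omega
        have hi : r i = 1 := by
          rw [← h0]
          congr 1
          ext
          simp only
          omega
        rw [if_neg h1, dif_pos h2, hi]
        exact ⟨r ⟨i.val + 1, h2⟩, hpos _, by simp⟩
    choose d hd using hd
    exact ⟨d, fun i => (hd i).1, hpos, hgcd, fun i => (hd i).2⟩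
end

section
/- Let n ≥ 2. There is exactly one arithmetical structure (d, r) on the path P_n such that d_i ≥ 2 for all 1 < i < n, namely the Laplacian arithmetical structure d = (1, 2, 2, …, 2, 1) and r = (1, 1, …, 1). -/
/-- For `n ≥ 2`: `(d, r)` is an arithmetical structure on `P_n` with `d_i ≥ 2` at every
interior vertex if and only if it is the Laplacian arithmetical structure
`d = (1, 2, …, 2, 1)`, `r = (1, …, 1)`.  In particular there is exactly one such
structure. -/
theorem arith_path_laplacian_unique (n : ℕ) (hn : 2 ≤ n) (d r : Fin n → ℕ) :
    (IsArithPath n d r ∧ ∀ i : Fin n, 0 < i.val → i.val < n - 1 → 2 ≤ d i) ↔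
      ((∀ i : Fin n, d i = if i.val = 0 ∨ i.val = n - 1 then 1 else 2) ∧
       (∀ i, r i = 1)) := by
  constructor
  · rintro ⟨⟨hd, hr, hg, he⟩, h2⟩
    have up : ∀ k (h : k + 1 < n), r ⟨k, by omega⟩ ≤ r ⟨k + 1, h⟩ := by
      intro k
      induction k with
      | zero =>
        intro h
        have e := he ⟨0, by omega⟩
        simp only [lt_irrefl, if_false, h, dif_pos, zero_add] at e
        have := Nat.le_mul_of_pos_left (r ⟨0, by omega⟩) (hd ⟨0, by omega⟩)
        simp only [zero_add]
        omega
      | succ k ih =>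
        intro h
        have e := he ⟨k + 1, by omega⟩
        simp only [Nat.succ_pos, if_true, h, dif_pos, Nat.add_sub_cancel] at e
        have := Nat.mul_le_mul_right (r ⟨k + 1, by omega⟩)
          (h2 ⟨k + 1, by omega⟩ (by simp) (by simp only; omega))
        have := ih (by omega)
        omega
    have down : ∀ j k (h : k + 1 < n), k + 2 + j = n → r ⟨k + 1, h⟩ ≤ r ⟨k, by omega⟩ := by
      intro j
      induction j with
      | zero =>
        intro k h hk
        have e := he ⟨k + 1, h⟩
        have hn' : ¬ k + 1 + 1 < n := by omega
        simp only [Nat.succ_pos, if_true, hn', dif_neg, not_false_eq_true,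
          Nat.add_sub_cancel] at e
        have := Nat.le_mul_of_pos_left (r ⟨k + 1, h⟩) (hd ⟨k + 1, h⟩)
        omega
      | succ j ih =>
        intro k h hk
        have e := he ⟨k + 1, h⟩
        have hn' : k + 1 + 1 < n := by omega
        simp only [Nat.succ_pos, if_true, hn', dif_pos, Nat.add_sub_cancel] at e
        have := Nat.mul_le_mul_right (r ⟨k + 1, h⟩)
          (h2 ⟨k + 1, h⟩ (by simp) (by simp only; omega))
        have := ih (k + 1) hn' (by omega)
        omega
    have const : ∀ k (h : k < n), r ⟨k, h⟩ = r ⟨0, by omega⟩ := by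
      intro k
      induction k with
      | zero => intro h; rfl
      | succ k ih =>
        intro h
        rw [← ih (by omega)]
        exact le_antisymm (down (n - (k + 2)) k h (by omega)) (up k h)
    -- The constant value divides every entry, hence divides the gcd.
    have one : r ⟨0, by omega⟩ = 1 := by
      apply Nat.dvd_one.mp
      rw [← hg]
      exact Finset.dvd_gcd fun i _ => (const i.1 i.2).symm.dvd
    have all : ∀ i, r i = 1 := fun i => (const i.1 i.2).trans one
    refine ⟨fun i => ?_, all⟩
    have e := he i
    simp only [all, mul_one] at e
    rw [e]
    have := i.isLt
    split_ifs <;> omega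
  · rintro ⟨hd, hr⟩
    refine ⟨⟨fun i => ?_, fun i => ?_, ?_, fun i => ?_⟩, fun i h0 h1 => ?_⟩
    · rw [hd]; split_ifs <;> omega
    · rw [hr]; omega
    · apply Nat.dvd_one.mp
      rw [← hr ⟨0, by omega⟩]
      exact Finset.gcd_dvd (Finset.mem_univ _)
    · simp only [hr, hd]
      have := i.isLt
      split_ifs <;> omega
    · rw [hd]; split_ifs <;> omega
end

section
/- Let n ≥ 3 and let A = (a_{ij}) be a symmetric n×n matrix of nonnegative integers with zero diagonal such that the graph on vertices v_1, …, v_n with a_{ij} edges between v_i and v_j is connected, and suppose a_{12} > 0. If d = (d_1, …, d_n) is a vector of positive integers for which there exists a vector r = (r_1, …, r_n) of positive integers with d_i r_i = Σ_{j=1}^n a_{ij} r_j for all i, and d_1 = 1, then d_2 > 1. -/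
/-! If `d 0 = d 1 = 1`, then `r 0` is the weighted sum of `r` over the neighbours of `0`, one of
which is `1`, so `r 1 ≤ r 0`, and strictly if `0` has a further neighbour (`lt_of_other_neighbor`).
By symmetry `r 0 ≤ r 1`, so both are equalities and neither vertex has a neighbour outside `{0, 1}`.
Since `n ≥ 3`, this contradicts connectedness. -/

lemma le_of_neighbor {n : ℕ} {A : Matrix (Fin n) (Fin n) ℕ} {r : Fin n → ℕ} {u v : Fin n}
    (h : r u = ∑ j, A u j * r j) (huv : 0 < A u v) : r v ≤ r u :=
  calc r v ≤ A u v * r v := Nat.le_mul_of_pos_left _ huv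
    _ ≤ ∑ j, A u j * r j :=
      Finset.single_le_sum (f := fun j => A u j * r j) (fun _ _ => Nat.zero_le _)
        (Finset.mem_univ v)
    _ = r u := h.symm

lemma lt_of_other_neighbor {n : ℕ} {A : Matrix (Fin n) (Fin n) ℕ} {r : Fin n → ℕ}
    (hr : ∀ i, 0 < r i) {u v k : Fin n} (h : r u = ∑ j, A u j * r j) (huv : 0 < A u v)
    (huk : 0 < A u k) (hkv : k ≠ v) : r v < r u :=
  calc r v ≤ A u v * r v := Nat.le_mul_of_pos_left _ huv
    _ < ∑ j, A u j * r j :=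
      Finset.single_lt_sum (f := fun j => A u j * r j) hkv (Finset.mem_univ v)
        (Finset.mem_univ k) (Nat.mul_pos huk (hr k)) (fun _ _ _ => Nat.zero_le _)
    _ = r u := h.symm

/-- Let `A` be a symmetric matrix of nonnegative integers with zero diagonal whose
associated (multi)graph on `n ≥ 3` vertices is connected, and suppose vertices `0` and
`1` are adjacent (`A 0 1 > 0`).  If `d` is an arithmetical `d`-structure on this graph
(i.e., there is a positive vector `r` with `(diag d - A) r = 0`) and `d 0 = 1`, then
`d 1 > 1`. -/
theorem arith_no_adjacent_ones (n : ℕ) (hn : 3 ≤ n) (A : Matrix (Fin n) (Fin n) ℕ)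
    (hsym : A.IsSymm) (hdiag : ∀ i, A i i = 0)
    (hconn : (SimpleGraph.fromRel (fun i j => 0 < A i j)).Connected)
    (d r : Fin n → ℕ) (hd : ∀ i, 0 < d i) (hr : ∀ i, 0 < r i)
    (heq : ∀ i, d i * r i = ∑ j, A i j * r j)
    (hadj : 0 < A ⟨0, by omega⟩ ⟨1, by omega⟩)
    (hd1 : d ⟨0, by omega⟩ = 1) :
    1 < d ⟨1, by omega⟩ := by
  by_contra hlt
  have hd2 : d ⟨1, by omega⟩ = 1 := le_antisymm (not_lt.mp hlt) (hd _)
  have h0 := heq ⟨0, by omega⟩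
  have h1 := heq ⟨1, by omega⟩
  rw [hd1, one_mul] at h0
  rw [hd2, one_mul] at h1
  have hadj' : 0 < A ⟨1, by omega⟩ ⟨0, by omega⟩ := by rwa [hsym.apply]
  obtain ⟨p⟩ := hconn.preconnected ⟨0, by omega⟩ ⟨2, by omega⟩
  -- A walk from `0` to `2` has an edge leaving `{0, 1}`.
  obtain ⟨e, -, hin, hout⟩ := p.exists_boundary_dart {⟨0, by omega⟩, ⟨1, by omega⟩}
    (by simp) (by simp [Fin.ext_iff])
  have hA : 0 < A e.fst e.snd := by
    rcases ((SimpleGraph.fromRel_adj _ _ _).mp e.adj).2 with h | h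
    · exact h
    · rwa [hsym.apply] at h
  simp only [Set.mem_insert_iff, Set.mem_singleton_iff, not_or] at hin hout
  rcases hin with h | h <;> rw [h] at hA
  · exact absurd (lt_of_other_neighbor hr h0 hadj hA hout.2) (le_of_neighbor h1 hadj').not_gt
  · exact absurd (lt_of_other_neighbor hr h1 hadj' hA hout.1) (le_of_neighbor h0 hadj).not_gt
end

section
/- Let n ≥ 2, let (d', r') be an arithmetical structure on the path P_n, and let 2 ≤ i ≤ n. Define vectors d, r of length n+1 by: d_j = d'_j for j < i−1, d_{i−1} = d'_{i−1} + 1, d_i = 1, d_{i+1} = d'_i + 1, and d_j = d'_{j−1} for j > i+1; and r_j = r'_j for j < i, r_i = r'_{i−1} + r'_i, and r_j = r'_{j−1} for j > i. Then (d, r) is an arithmetical structure on the path P_{n+1}. -/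
/-- Subdividing an arithmetical structure on `P_n` at (0-indexed) position
`i` (`1 ≤ i ≤ n - 1`) yields an arithmetical structure on `P_{n+1}`:
the new `d` is obtained by inserting a `1` at position `i` and adding `1` to the two
neighboring entries, and the new `r` by inserting `r'_{i-1} + r'_i` at position `i`. -/
theorem arith_path_subdivision (n : ℕ) (hn : 2 ≤ n) (d' r' : Fin n → ℕ)
    (h : IsArithPath n d' r') (i : ℕ) (hi1 : 1 ≤ i) (hi2 : i ≤ n - 1) :
    IsArithPath (n + 1)
      (fun j : Fin (n + 1) =>
        if hj : j.val < i - 1 then d' ⟨j.val, by omega⟩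
        else if j.val = i - 1 then d' ⟨i - 1, by omega⟩ + 1
        else if j.val = i then 1
        else if j.val = i + 1 then d' ⟨i, by omega⟩ + 1
        else d' ⟨j.val - 1, by have := j.isLt; omega⟩)
      (fun j : Fin (n + 1) =>
        if hj : j.val < i then r' ⟨j.val, by omega⟩
        else if j.val = i then r' ⟨i - 1, by omega⟩ + r' ⟨i, by omega⟩
        else r' ⟨j.val - 1, by have := j.isLt; omega⟩) := by
  obtain ⟨hd, hr, hg, he⟩ := h
  -- Extending `d'` and `r'` to functions on `ℕ` removes the bound proofs from the index arithmetic.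
  obtain ⟨D, hD⟩ : ∃ D : ℕ → ℕ, ∀ (k : ℕ) (hk : k < n), d' ⟨k, hk⟩ = D k :=
    ⟨fun k => if hk : k < n then d' ⟨k, hk⟩ else 0, fun k hk => by simp [hk]⟩
  obtain ⟨R, hR⟩ : ∃ R : ℕ → ℕ, ∀ (k : ℕ) (hk : k < n), r' ⟨k, hk⟩ = R k :=
    ⟨fun k => if hk : k < n then r' ⟨k, hk⟩ else 0, fun k hk => by simp [hk]⟩
  have hDpos : ∀ k, k < n → 0 < D k := fun k hk => hD k hk ▸ hd ⟨k, hk⟩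
  have hRpos : ∀ k, k < n → 0 < R k := fun k hk => hR k hk ▸ hr ⟨k, hk⟩
  have hE : ∀ k, k < n → D k * R k =
      (if 0 < k then R (k - 1) else 0) + (if k + 1 < n then R (k + 1) else 0) := by
    intro k hk
    have := he ⟨k, hk⟩
    simpa only [hD, hR, dite_eq_ite] using this
  refine ⟨?_, ?_, ?_, ?_⟩
  · rintro ⟨j, hj⟩
    simp only [hD]
    split_ifs <;> first | omega | (apply hDpos; omega)
  · rintro ⟨j, hj⟩
    simp only [hR]
    have := hRpos i (by omega)
    split_ifs <;> first | omega | (apply hRpos; omega)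
  · refine Nat.dvd_one.mp ((Finset.dvd_gcd fun j _ => ?_).trans hg.dvd)
    obtain ⟨j, hj⟩ := j
    by_cases hji : j < i
    · refine (Finset.gcd_dvd (Finset.mem_univ (⟨j, by omega⟩ : Fin (n + 1)))).trans
        (dvd_of_eq ?_)
      simp [hji]
    · refine (Finset.gcd_dvd (Finset.mem_univ (⟨j + 1, by omega⟩ : Fin (n + 1)))).trans
        (dvd_of_eq ?_)
      simp [show ¬ j + 1 < i by omega, show j + 1 ≠ i by omega]
  · rintro ⟨j, hj⟩
    simp only [hD, hR, dite_eq_ite]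
    rcases lt_trichotomy j i with hji | rfl | hji
    · have h1 := hE j (by omega)
      rcases Nat.lt_or_ge j (i - 1) with hlt | hge
      · rw [if_pos hlt, if_pos hji, h1]
        simp only [show j - 1 < i by omega, show j + 1 < i by omega, show j + 1 < n by omega,
          show j + 1 < n + 1 by omega, if_true]
      · obtain rfl : i = j + 1 := by omega
        simp only [show j + 1 < n by omega, if_true] at h1
        simp [show j - 1 < j + 1 by omega, show j < n by omega, add_mul, h1]
        omega
    · simp [show ¬ j < j - 1 by omega, show j ≠ j - 1 by omega, show 0 < j by omega,
        show j - 1 < j by omega, show j < n by omega]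
    · have h1 := hE (j - 1) (by omega)
      obtain ⟨m, rfl⟩ : ∃ m, j = m + 1 := ⟨j - 1, by omega⟩
      simp only [Nat.add_sub_cancel] at h1 ⊢
      rcases Nat.lt_or_ge i m with hlt | hge
      · simp only [show ¬ m + 1 < i - 1 by omega, show m + 1 ≠ i - 1 by omega,
          show m + 1 ≠ i by omega, show m + 1 ≠ i + 1 by omega, show ¬ m + 1 < i by omega,
          show ¬ m < i by omega, show m ≠ i by omega, show ¬ m + 1 + 1 < i by omega,
          show m + 1 + 1 ≠ i by omega, if_false, h1, show 0 < m by omega,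
          Nat.succ_pos, if_true, Nat.add_lt_add_iff_right]
      · obtain rfl : i = m := by omega
        simp [show ¬ i + 1 < i - 1 by omega, show i + 1 ≠ i - 1 by omega,
          show ¬ i + 1 + 1 < i by omega, show i + 1 + 1 ≠ i by omega, add_mul, h1,
          show 0 < i by omega]
        omega
end

section
/- Let n ≥ 3 and let (d, r) be an arithmetical structure on the path P_n that is not the Laplacian arithmetical structure (i.e., not d = (1,2,…,2,1), r = (1,…,1)). Then there exist an arithmetical structure (d', r') on the path P_{n−1} and an index 2 ≤ i ≤ n such that (d, r) is the subdivision of (d', r') at position i. -/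
/-- The defining equation of an arithmetical structure for a sequence `R` on `ℕ`; it is
used with `R n = 0`, which is what makes the last equation the right one. -/
def PathEq (n : ℕ) (D R : ℕ → ℕ) : Prop :=
  ∀ j < n, D j * R j = (if 0 < j then R (j - 1) else 0) + R (j + 1)

lemma isArithPath_of_pathEq {n : ℕ} {D R : ℕ → ℕ} (hR0 : R n = 0)
    (hD : ∀ j < n, 0 < D j) (hR : ∀ j < n, 0 < R j)
    (hg : ∀ g, (∀ j < n, g ∣ R j) → g ∣ 1) (he : PathEq n D R) :
    IsArithPath n (fun j => D j) (fun j => R j) := by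
  refine ⟨fun i => hD _ i.2, fun i => hR _ i.2, ?_, fun i => ?_⟩
  · apply Nat.dvd_one.mp
    exact hg _ fun j hj =>
      Finset.gcd_dvd (f := fun j : Fin n => R j) (Finset.mem_univ (⟨j, hj⟩ : Fin n))
  · have h1 := he i i.2
    by_cases hlt : i.val + 1 < n
    · simpa [hlt] using h1
    · have h2 : i.val + 1 = n := by omega
      simpa [h2, hR0] using h1

lemma exists_pathEq {n : ℕ} {d r : Fin n → ℕ} (h : IsArithPath n d r) :
    ∃ D R : ℕ → ℕ, d = (fun j : Fin n => D j) ∧ r = (fun j : Fin n => R j) ∧ R n = 0 ∧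
      (∀ j < n, 0 < D j) ∧ (∀ j < n, 0 < R j) ∧
      (∀ g, (∀ j < n, g ∣ R j) → g ∣ 1) ∧ PathEq n D R := by
  obtain ⟨hd, hr, hg, he⟩ := h
  refine ⟨fun j => if h : j < n then d ⟨j, h⟩ else 0, fun j => if h : j < n then r ⟨j, h⟩ else 0,
    ?_, ?_, ?_, ?_, ?_, ?_, ?_⟩
  · funext j; simp
  · funext j; simp
  · simp
  · intro j hj; simpa [hj] using hd _
  · intro j hj; simpa [hj] using hr _
  · intro g h
    rw [← hg]
    refine Finset.dvd_gcd fun j _ => ?_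
    simpa using h j j.2
  · intro j hj
    have h1 := he ⟨j, hj⟩
    have h2 : j - 1 < n := by omega
    simpa [hj, h2] using h1

/-- With no interior `1` in `D`, convexity makes `R` constant, so the structure is Laplacian. -/
lemma exists_interior_one {n : ℕ} (hn : 3 ≤ n) {D R : ℕ → ℕ} (hR0 : R n = 0)
    (hD : ∀ j < n, 0 < D j) (hg : ∀ g, (∀ j < n, g ∣ R j) → g ∣ 1) (he : PathEq n D R)
    (hnotL : ¬ ((∀ j < n, D j = if j = 0 ∨ j = n - 1 then 1 else 2) ∧ ∀ j < n, R j = 1)) :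
    ∃ k, k + 2 < n ∧ D (k + 1) = 1 := by
  by_contra! hne
  apply hnotL
  have hmono : ∀ j, j + 1 < n → R j ≤ R (j + 1) := by
    intro j
    induction j with
    | zero =>
      intro _
      have h1 := he 0 (by omega)
      have h2 := hD 0 (by omega)
      simp only [lt_irrefl, if_false, zero_add] at h1 ⊢
      nlinarith
    | succ j ih =>
      intro hj
      have h1 := he (j + 1) (by omega)
      have h2 := hD (j + 1) (by omega)
      have h3 := hne j (by omega)
      have h4 := ih (by omega)
      have h5 : 2 ≤ D (j + 1) := by omega
      have h6 := Nat.mul_le_mul_right (R (j + 1)) h5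
      simp at h1
      omega
  have hlast : R (n - 1) ≤ R (n - 2) := by
    have h1 := he (n - 1) (by omega)
    have h2 := hD (n - 1) (by omega)
    rw [if_pos (by omega), show n - 1 + 1 = n by omega, hR0,
      show n - 1 - 1 = n - 2 by omega] at h1
    nlinarith
  -- Convexity carries `hlast` leftwards; `m` is the distance of the step `j, j + 1` from the end.
  have hconst : ∀ m j, j + 1 < n → n - 2 - j = m → R (j + 1) ≤ R j := by
    intro m
    induction m with
    | zero =>
      intro j hj hm
      have : j = n - 2 := by omega
      subst this
      rwa [show n - 2 + 1 = n - 1 by omega]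
    | succ m ih =>
      intro j hj hm
      have h0 := ih (j + 1) (by omega) (by omega)
      have h1 := he (j + 1) (by omega)
      have h2 := hD (j + 1) (by omega)
      have h3 := hne j (by omega)
      have h5 : 2 ≤ D (j + 1) := by omega
      have h6 := Nat.mul_le_mul_right (R (j + 1)) h5
      simp at h1
      omega
  have hall : ∀ j < n, R j = R 0 := by
    intro j
    induction j with
    | zero => intro _; rfl
    | succ j ih =>
      intro hj
      rw [← ih (by omega)]
      exact le_antisymm (hconst _ j hj rfl) (hmono j hj)
  have hR1 : ∀ j < n, R j = 1 := by
    intro j hj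
    rw [hall j hj]
    exact Nat.dvd_one.mp (hg _ fun j hj => by rw [hall j hj])
  refine ⟨fun j hj => ?_, hR1⟩
  have h1 := he j hj
  rw [hR1 j hj, mul_one] at h1
  by_cases hj0 : j = 0
  · subst hj0
    simpa [hR1 1 (by omega)] using h1
  · rw [if_pos (by omega), hR1 (j - 1) (by omega)] at h1
    by_cases hjn : j = n - 1
    · rw [if_pos (Or.inr hjn), h1, show j + 1 = n by omega, hR0]
    · rw [if_neg (by omega), h1, hR1 (j + 1) (by omega)]

/-- Every arithmetical structure on `P_n` (`n ≥ 3`) other than the Laplacian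
arithmetical structure `d = (1, 2, …, 2, 1)`, `r = (1, …, 1)` is the subdivision of an
arithmetical structure on `P_{n-1}` at some (0-indexed) position `i`. -/
theorem arith_path_is_subdivision (n : ℕ) (hn : 3 ≤ n) (d r : Fin n → ℕ)
    (h : IsArithPath n d r)
    (hnotL : ¬ ((∀ i : Fin n, d i = if i.val = 0 ∨ i.val = n - 1 then 1 else 2) ∧
                (∀ i, r i = 1))) :
    ∃ (d' r' : Fin (n - 1) → ℕ) (i : ℕ) (_hi1 : 1 ≤ i) (hi2 : i ≤ n - 2),
      IsArithPath (n - 1) d' r' ∧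
      d = (fun j : Fin n =>
        if hj : j.val < i - 1 then d' ⟨j.val, by omega⟩
        else if j.val = i - 1 then d' ⟨i - 1, by omega⟩ + 1
        else if j.val = i then 1
        else if j.val = i + 1 then d' ⟨i, by omega⟩ + 1
        else d' ⟨j.val - 1, by have := j.isLt; omega⟩) ∧
      r = (fun j : Fin n =>
        if hj : j.val < i then r' ⟨j.val, by omega⟩
        else if j.val = i then r' ⟨i - 1, by omega⟩ + r' ⟨i, by omega⟩
        else r' ⟨j.val - 1, by have := j.isLt; omega⟩) := by
  obtain ⟨D, R, rfl, rfl, hR0, hD, hR, hg, he⟩ := exists_pathEq h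
  obtain ⟨k, hk, hk1⟩ := exists_interior_one hn hR0 hD hg he
    (fun hL => hnotL ⟨fun i => hL.1 i i.2, fun i => hL.2 i i.2⟩)
  have hmid : R (k + 1) = R k + R (k + 2) := by
    have h1 := he (k + 1) (by omega)
    simpa [hk1] using h1
  have hRk := hR k (by omega)
  have hRk2 := hR (k + 2) (by omega)
  have hek := he k (by omega)
  have hek2 := he (k + 2) (by omega)
  rw [hmid] at hek
  rw [if_pos (by omega), show k + 2 - 1 = k + 1 by omega, hmid] at hek2
  have hDk : 2 ≤ D k := by
    by_contra hlt
    have : D k ≤ 1 := by omega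
    have h1 := Nat.mul_le_mul_right (R k) this
    omega
  have hDk2 : 2 ≤ D (k + 2) := by
    by_contra hlt
    have : D (k + 2) ≤ 1 := by omega
    have h1 := Nat.mul_le_mul_right (R (k + 2)) this
    omega
  obtain ⟨a, ha⟩ := Nat.exists_eq_add_of_le' hDk
  obtain ⟨b, hb⟩ := Nat.exists_eq_add_of_le' hDk2
  obtain ⟨D', hD'⟩ : ∃ D' : ℕ → ℕ, D' = fun j => if j < k then D j else if j = k then a + 1
    else if j = k + 1 then b + 1 else D (j + 1) := ⟨_, rfl⟩
  obtain ⟨R', hR'⟩ : ∃ R' : ℕ → ℕ, R' = fun j => if j < k + 1 then R j else R (j + 1) :=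
    ⟨_, rfl⟩
  have hR'lo : ∀ j, j < k + 1 → R' j = R j := fun j hj => by
    simp only [hR', if_pos hj]
  have hR'hi : ∀ j, k + 1 ≤ j → R' j = R (j + 1) := fun j hj => by
    simp only [hR', if_neg (Nat.not_lt.mpr hj)]
  have hD'lo : ∀ j, j < k → D' j = D j := fun j hj => by simp [hD', hj]
  have hD'k : D' k = a + 1 := by simp [hD']
  have hD'k1 : D' (k + 1) = b + 1 := by simp [hD']
  have hD'hi : ∀ j, k + 2 ≤ j → D' j = D (j + 1) := fun j hj => by
    simp only [hD']
    rw [if_neg (by omega), if_neg (by omega), if_neg (by omega)]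
  refine ⟨fun j => D' j, fun j => R' j, k + 1, by omega, by omega,
    isArithPath_of_pathEq ?_ ?_ ?_ ?_ ?_, ?_, ?_⟩
  · rw [hR'hi _ (by omega), show n - 1 + 1 = n by omega, hR0]
  · intro j hj
    have h1 := hD j (by omega)
    have h2 := hD (j + 1) (by omega)
    simp only [hD']
    split_ifs <;> omega
  · intro j hj
    have h1 := hR j (by omega)
    have h2 := hR (j + 1) (by omega)
    simp only [hR']
    split_ifs <;> omega
  · intro g hgd
    refine hg g fun j hj => ?_
    have hgk := hgd k (by omega)
    have hgk1 := hgd (k + 1) (by omega)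
    rw [hR'lo k (by omega)] at hgk
    rw [hR'hi (k + 1) le_rfl] at hgk1
    rcases lt_trichotomy j (k + 1) with hlt | rfl | hgt
    · rw [← hR'lo j hlt]
      exact hgd j (by omega)
    · rw [hmid]
      exact dvd_add hgk hgk1
    · have h1 := hgd (j - 1) (by omega)
      rwa [hR'hi _ (by omega), show j - 1 + 1 = j by omega] at h1
  · intro j hj
    have hcases : j < k ∨ j = k ∨ j = k + 1 ∨ k + 2 ≤ j := by omega
    rcases hcases with hlt | rfl | rfl | hge
    · rw [hD'lo j hlt, hR'lo j (by omega), hR'lo (j - 1) (by omega), hR'lo (j + 1) (by omega)]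
      exact he j (by omega)
    · rw [hD'k, hR'lo j (by omega), hR'lo (j - 1) (by omega), hR'hi (j + 1) le_rfl]
      rw [ha] at hek
      linarith
    · rw [hD'k1, hR'hi (k + 1) le_rfl, if_pos (by omega), hR'hi (k + 1 + 1) (by omega),
        show k + 1 - 1 = k by omega, hR'lo k (by omega)]
      rw [hb] at hek2
      linarith
    · have h1 := he (j + 1) (by omega)
      rw [if_pos (by omega), show j + 1 - 1 = j by omega] at h1
      rw [hD'hi j hge, hR'hi j (by omega), if_pos (by omega), hR'hi (j - 1) (by omega),
        hR'hi (j + 1) (by omega), show j - 1 + 1 = j by omega]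
      exact h1
  · funext j
    simp only [Nat.add_sub_cancel]
    split_ifs with h1 h2 h3 h4
    · exact (hD'lo _ h1).symm
    · rw [h2, hD'k, ha]
    · rw [h3, hk1]
    · rw [h4, hD'k1, hb]
    · rw [hD'hi _ (by omega), show j.val - 1 + 1 = j.val by omega]
  · funext j
    simp only [Nat.add_sub_cancel]
    split_ifs with h1 h2
    · exact (hR'lo _ h1).symm
    · rw [h2, hR'lo k (by omega), hR'hi (k + 1) le_rfl, hmid]
    · rw [hR'hi _ (by omega), show j.val - 1 + 1 = j.val by omega]
end

section
/- Let n and m be integers with 2 ≤ m ≤ n. The number of sequences (b_1, …, b_{n−2}) of positive integers satisfying b_i ≤ i for all i, b_i ≤ b_{i+1} for all i < n−2, and b_1 = b_2 = ⋯ = b_{m−2} = 1, equals the ballot number B(n−2, n−m). -/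
/-- Monotone sequences `d` of `l` naturals with `d j ≤ s + j`: what remains of a ballot sequence
after its first `s` entries, all equal to `1`, are removed and the others are lowered by one. -/
def tailSet (s l : ℕ) : Set (Fin l → ℕ) := {d | (∀ j, d j ≤ s + j.val) ∧ Monotone d}

lemma tailSet_finite (s l : ℕ) : (tailSet s l).Finite :=
  (Set.finite_Iic (fun j : Fin l => s + j.val)).subset fun _ hd j => hd.1 j

lemma tailSet_ncard_zero (s : ℕ) : (tailSet s 0).ncard = 1 := by
  have h : tailSet s 0 = {Fin.elim0} := by
    ext d
    simp only [tailSet, Set.mem_ofPred_eq, Set.mem_singleton_iff]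
    exact ⟨fun _ => funext fun j => j.elim0, fun _ => ⟨fun j => j.elim0, fun j => j.elim0⟩⟩
  rw [h, Set.ncard_singleton]

lemma cons_zero_mem_tailSet {s l : ℕ} {d : Fin l → ℕ} (hd : d ∈ tailSet (s + 1) l) :
    (Fin.cons 0 d : Fin (l + 1) → ℕ) ∈ tailSet s (l + 1) := by
  refine ⟨fun j => ?_, fun i j hij => ?_⟩
  · refine Fin.cases ?_ (fun j => ?_) j
    · simp
    · have := hd.1 j
      simp only [Fin.cons_succ, Fin.val_succ]
      omega
  · induction i using Fin.cases with
    | zero => simp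
    | succ i =>
      induction j using Fin.cases with
      | zero => exact absurd hij (by simp)
      | succ j => simpa using hd.2 (Fin.succ_le_succ_iff.mp hij)

lemma exists_cons_zero {s l : ℕ} {d : Fin (l + 1) → ℕ} (hd : d ∈ tailSet s (l + 1))
    (h0 : d 0 = 0) : ∃ e ∈ tailSet (s + 1) l, (Fin.cons 0 e : Fin (l + 1) → ℕ) = d := by
  refine ⟨Fin.tail d, ⟨fun j => ?_, fun i j hij => hd.2 (Fin.succ_le_succ_iff.mpr hij)⟩, ?_⟩
  · have := hd.1 j.succ
    simp only [Fin.val_succ] at this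
    simp only [Fin.tail]
    omega
  · rw [← h0, Fin.cons_self_tail]

lemma cons_zero_injective (l : ℕ) :
    Function.Injective (fun d : Fin l → ℕ => (Fin.cons 0 d : Fin (l + 1) → ℕ)) :=
  Fin.cons_right_injective (α := fun _ => ℕ) 0

/-- When `s = 0` the bound forces the first entry to be `0`. -/
lemma tailSet_ncard_zero_succ (l : ℕ) : (tailSet 0 (l + 1)).ncard = (tailSet 1 l).ncard := by
  rw [← Set.ncard_image_of_injective (tailSet 1 l) (cons_zero_injective l)]
  congr 1
  ext d
  constructor
  · intro hd
    exact exists_cons_zero hd (by simpa using hd.1 0)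
  · rintro ⟨e, he, rfl⟩
    exact cons_zero_mem_tailSet he

/-- The ballot recursion, by splitting on whether the first entry vanishes. -/
lemma tailSet_ncard_succ_succ (s l : ℕ) :
    (tailSet (s + 1) (l + 1)).ncard = (tailSet (s + 2) l).ncard + (tailSet s (l + 1)).ncard := by
  have hinj : Function.Injective (fun (d : Fin (l + 1) → ℕ) j => d j + 1) := by
    intro d e h
    funext j
    exact Nat.succ_injective (congrFun h j)
  rw [← Set.ncard_image_of_injective (tailSet (s + 2) l) (cons_zero_injective l),
    ← Set.ncard_image_of_injective (tailSet s (l + 1)) hinj,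
    ← Set.ncard_union_eq ?_ ((tailSet_finite _ _).image _) ((tailSet_finite _ _).image _)]
  · congr 1
    ext d
    constructor
    · intro hd
      by_cases h0 : d 0 = 0
      · exact Or.inl (exists_cons_zero hd h0)
      · have hpos : ∀ j, 1 ≤ d j := fun j =>
          (Nat.one_le_iff_ne_zero.mpr h0).trans (hd.2 (Fin.zero_le j))
        refine Or.inr ⟨fun j => d j - 1, ⟨fun j => ?_, fun i j hij => ?_⟩, ?_⟩
        · have := hd.1 j
          show d j - 1 ≤ _
          omega
        · exact Nat.sub_le_sub_right (hd.2 hij) 1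
        · funext j
          exact Nat.sub_add_cancel (hpos j)
    · rintro (⟨e, he, rfl⟩ | ⟨e, he, rfl⟩)
      · exact cons_zero_mem_tailSet he
      · refine ⟨fun j => ?_, fun i j hij => Nat.add_le_add_right (he.2 hij) 1⟩
        have := he.1 j
        show e j + 1 ≤ _
        omega
  · rw [Set.disjoint_left]
    rintro _ ⟨e, _, rfl⟩ ⟨f, _, h⟩
    exact absurd (congrFun h 0) (by simp)

/-- The reflection formula for the number of tails, stated without subtraction. -/
lemma tailSet_ncard_add_choose (l s : ℕ) :
    (tailSet s (l + 1)).ncard + (s + 2 * l + 2).choose l = (s + 2 * l + 2).choose (l + 1) := by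
  induction l generalizing s with
  | zero =>
    induction s with
    | zero => rw [tailSet_ncard_zero_succ, tailSet_ncard_zero]; rfl
    | succ s ih =>
      rw [tailSet_ncard_succ_succ, tailSet_ncard_zero]
      simp at ih ⊢
      omega
  | succ l ihl =>
    induction s with
    | zero =>
      have h1 := ihl 1
      have hsymm : (2 * l + 3).choose (l + 1 + 1) = (2 * l + 3).choose (l + 1) :=
        Nat.choose_symm_of_eq_add (by omega)
      have e1 : 1 + 2 * l + 2 = 2 * l + 3 := by omega
      have e2 : 0 + 2 * (l + 1) + 2 = (2 * l + 3) + 1 := by omega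
      rw [e1] at h1
      rw [tailSet_ncard_zero_succ, e2, Nat.choose_succ_succ' _ l, Nat.choose_succ_succ' _ (l + 1)]
      omega
    | succ s ihs =>
      have h1 := ihl (s + 2)
      have e1 : s + 2 + 2 * l + 2 = s + 2 * l + 4 := by omega
      have e2 : s + 2 * (l + 1) + 2 = s + 2 * l + 4 := by omega
      have e3 : s + 1 + 2 * (l + 1) + 2 = (s + 2 * l + 4) + 1 := by omega
      rw [e1] at h1
      rw [e2] at ihs
      rw [tailSet_ncard_succ_succ, e3, Nat.choose_succ_succ' _ l, Nat.choose_succ_succ' _ (l + 1)]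
      omega

lemma tailSet_ncard (s l : ℕ) : (tailSet s l).ncard = ballot (s + l) l := by
  have hk : s + l + 1 - l = s + 1 := by omega
  rw [ballot, hk]
  symm
  apply Nat.div_eq_of_eq_mul_left (Nat.succ_pos _)
  cases l with
  | zero => simp [tailSet_ncard_zero]
  | succ l =>
    have h := tailSet_ncard_add_choose l s
    -- The two binomials of the reflection formula differ by the factor `(l + 1) / (s + l + 2)`.
    have hr := Nat.choose_succ_right_eq (s + 2 * l + 2) l
    have e1 : s + 2 * l + 2 - l = s + l + 2 := by omega
    have e2 : s + (l + 1) + (l + 1) = s + 2 * l + 2 := by omega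
    have hsymm : (s + 2 * l + 2).choose (s + (l + 1)) = (s + 2 * l + 2).choose (l + 1) :=
      Nat.choose_symm_of_eq_add (by omega)
    rw [e1] at hr
    rw [e2, hsymm]
    zify at h hr ⊢
    linear_combination (-(s : ℤ) - l - 2) * h - hr

/-- Removing the initial block of `s` ones and lowering the other entries by one identifies the
ballot sequences in question with `tailSet s l`. -/
lemma card_ballotSequences (s l : ℕ) :
    Nat.card {b : Fin (s + l) → ℕ //
      (∀ i, 1 ≤ b i) ∧
      (∀ i : Fin (s + l), b i ≤ i.val + 1) ∧
      (∀ i j : Fin (s + l), i ≤ j → b i ≤ b j) ∧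
      (∀ i : Fin (s + l), i.val < s → b i = 1)} = (tailSet s l).ncard := by
  rw [← Nat.card_coe_set_eq]
  refine Nat.card_congr
    { toFun := fun b => ⟨fun j => b.1 (Fin.natAdd s j) - 1, ⟨?_, ?_⟩⟩
      invFun := fun d => ⟨fun i => if h : i.val < s then 1 else d.1 ⟨i.val - s, by omega⟩ + 1,
        ?_, ?_, ?_, ?_⟩
      left_inv := ?_
      right_inv := ?_ }
  · intro j
    have := b.2.2.1 (Fin.natAdd s j)
    simp only [Fin.val_natAdd] at this
    show b.1 (Fin.natAdd s j) - 1 ≤ _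
    omega
  · intro i j hij
    have hle : Fin.natAdd s i ≤ Fin.natAdd s j := Nat.add_le_add_left hij s
    exact Nat.sub_le_sub_right (b.2.2.2.1 _ _ hle) 1
  · intro i
    dsimp only
    split_ifs <;> omega
  · intro i
    dsimp only
    split_ifs with h
    · omega
    · have := d.2.1 ⟨i.val - s, by omega⟩
      dsimp only at this
      omega
  · intro i j hij
    have hij' : i.val ≤ j.val := hij
    dsimp only
    split_ifs with hi hj hj
    · exact le_rfl
    · omega
    · omega
    · exact Nat.add_le_add_right (d.2.2 (Fin.mk_le_mk.mpr (by omega))) 1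
  · intro i hi
    simp [hi]
  · intro b
    apply Subtype.ext
    funext i
    dsimp only
    split_ifs with h
    · exact (b.2.2.2.2 i h).symm
    · have hi : Fin.natAdd s (⟨i.val - s, by omega⟩ : Fin l) = i := by
        apply Fin.ext
        simp only [Fin.val_natAdd]
        omega
      rw [hi]
      exact Nat.sub_add_cancel (b.2.1 i)
  · intro d
    apply Subtype.ext
    funext j
    simp

/-- For `2 ≤ m ≤ n`, the number of ballot sequences `(b_1, …, b_{n-2})` (positive
integers with `b_i ≤ i` and `b_i ≤ b_{i+1}`) whose first `m - 2` entries equal `1`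
is the ballot number `B(n-2, n-m)`.  (Here `b` is 0-indexed: `b_i` is `b ⟨i-1⟩`.) -/
theorem ballot_sequence_count (n m : ℕ) (hm : 2 ≤ m) (hmn : m ≤ n) :
    Nat.card {b : Fin (n - 2) → ℕ //
      (∀ i, 1 ≤ b i) ∧
      (∀ i : Fin (n - 2), b i ≤ i.val + 1) ∧
      (∀ i j : Fin (n - 2), i ≤ j → b i ≤ b j) ∧
      (∀ i : Fin (n - 2), i.val < m - 2 → b i = 1)} = ballot (n - 2) (n - m) := by
  obtain ⟨s, rfl⟩ := Nat.exists_eq_add_of_le' hm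
  obtain ⟨l, rfl⟩ := Nat.exists_eq_add_of_le hmn
  have hN : s + 2 + l - 2 = s + l := by omega
  have hl : s + 2 + l - (s + 2) = l := by omega
  rw [hN, hl, Nat.add_sub_cancel, card_ballotSequences, tailSet_ncard]
end
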